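/- arXiv:2303.17936 — 2 statements merged into one kernel-verified Lean document; each statement's English description precedes it below -/
import Mathlib

section
/- The unique weight-two newform on Γ₀(11), f(τ) = q ∏_{n≥1}(1−qⁿ)²(1−q¹¹ⁿ)², satisfies the algebraic relation between its differential invariants: for every τ ∈ ℍ, J₂⁴ + 32(I₂ − 8)(I₂² + 72I₂ − 944)J₂² + 256(I₂ + 8)(I₂³ + 152I₂² − 704I₂ + 1168)(I₂ − 8)² = 0, where I₂ = (2ff'' − 3(f')²)/f⁴ and J₂ = (4f²f''' − 24ff'f'' + 24(f')³)/f⁶. -/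
open Complex

noncomputable section

/-- The normalized derivative `F' = (2πi)⁻¹ dF/dτ`. -/
def nderiv (F : ℂ → ℂ) : ℂ → ℂ := fun τ => (2 * Real.pi * Complex.I)⁻¹ * deriv F τ

/-- `q = e^{2πiτ}`. -/
def qq (τ : ℂ) : ℂ := Complex.exp (2 * Real.pi * Complex.I * τ)

/-- The differential invariant `I₂ = (2ff'' − 3(f')²)/f⁴`. -/
def I2 (f : ℂ → ℂ) : ℂ → ℂ := fun τ =>
  (2 * f τ * nderiv (nderiv f) τ - 3 * (nderiv f τ) ^ 2) / f τ ^ 4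

/-- The differential invariant `J₂ = (4f²f''' − 24ff'f'' + 24(f')³)/f⁶`. -/
def J2 (f : ℂ → ℂ) : ℂ → ℂ := fun τ =>
  (4 * f τ ^ 2 * nderiv (nderiv (nderiv f)) τ -
    24 * f τ * nderiv f τ * nderiv (nderiv f) τ + 24 * (nderiv f τ) ^ 3) / f τ ^ 6

/-- The unique weight-two newform on `Γ₀(11)`,
`f(τ) = q ∏_{n≥1} (1−qⁿ)²(1−q¹¹ⁿ)²`. -/
def f11 : ℂ → ℂ := fun τ =>
  qq τ * ∏' n : ℕ, ((1 - qq τ ^ (n + 1)) ^ 2 * (1 - qq τ ^ (11 * (n + 1))) ^ 2)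

section

/-- The exponent of the multiplier system of `η²`. -/
def etaPhi {R : Type*} [CommRing R] (a b c d : R) : R :=
  (1 - c * c) * (b * d + 3 * (c - 1) * d + c + 3) + c * (a + d - 3)

lemma etaPhi_map {R S : Type*} [CommRing R] [CommRing S] (g : R →+* S) (a b c d : R) :
    g (etaPhi a b c d) = etaPhi (g a) (g b) (g c) (g d) := by
  simp [etaPhi, map_ofNat g 3]

lemma zmod12_ext (x y : ZMod 12)
    (h4 : ZMod.castHom (show 4 ∣ 12 by norm_num) (ZMod 4) x =
      ZMod.castHom (show 4 ∣ 12 by norm_num) (ZMod 4) y)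
    (h3 : ZMod.castHom (show 3 ∣ 12 by norm_num) (ZMod 3) x =
      ZMod.castHom (show 3 ∣ 12 by norm_num) (ZMod 3) y) : x = y := by
  revert x y; decide

lemma etaPhi_all4 : ∀ a b c d : ZMod 4, a * d - b * c = 1 →
    etaPhi a (a + b) c (c + d) = etaPhi a b c d + 1 ∧
    etaPhi b (-a) d (-c) = etaPhi a b c d - 3 ∧
    etaPhi a b c d + etaPhi a (-b) (-c) d = 0 := by decide +kernel

lemma etaPhi_all3 : ∀ a b c d : ZMod 3, a * d - b * c = 1 →
    etaPhi a (a + b) c (c + d) = etaPhi a b c d + 1 ∧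
    etaPhi b (-a) d (-c) = etaPhi a b c d - 3 ∧
    etaPhi a b c d + etaPhi a (-b) (-c) d = 0 := by decide +kernel

lemma etaPhi_all (a b c d : ZMod 12) (h : a * d - b * c = 1) :
    etaPhi a (a + b) c (c + d) = etaPhi a b c d + 1 ∧
    etaPhi b (-a) d (-c) = etaPhi a b c d - 3 ∧
    etaPhi a b c d + etaPhi a (-b) (-c) d = 0 := by
  have h4 := etaPhi_all4 _ _ _ _ (by simpa only [map_sub, map_mul, map_one] using congrArg (ZMod.castHom (show 4 ∣ 12 by norm_num) (ZMod 4)) h)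
  have h3 := etaPhi_all3 _ _ _ _ (by simpa only [map_sub, map_mul, map_one] using congrArg (ZMod.castHom (show 3 ∣ 12 by norm_num) (ZMod 3)) h)
  refine ⟨zmod12_ext _ _ ?_ ?_, zmod12_ext _ _ ?_ ?_, zmod12_ext _ _ ?_ ?_⟩
  · simpa only [etaPhi_map, map_add, map_neg, map_sub, map_one] using h4.1
  · simpa only [etaPhi_map, map_add, map_neg, map_sub, map_one] using h3.1
  · simpa only [etaPhi_map, map_add, map_neg, map_sub, map_one, map_ofNat] using h4.2.1
  · simpa only [etaPhi_map, map_add, map_neg, map_sub, map_one, map_ofNat] using h3.2.1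
  · simpa only [etaPhi_map, map_add, map_neg, map_sub, map_one, map_zero] using h4.2.2
  · simpa only [etaPhi_map, map_add, map_neg, map_sub, map_one, map_zero] using h3.2.2

open UpperHalfPlane hiding I
open scoped MatrixGroups ModularForm

/-- `η²` on the upper half plane. -/
def etaSq (z : ℍ) : ℂ := ModularForm.eta z ^ 2

lemma etaSq_T : etaSq ∣[(1 : ℤ)] ModularGroup.T = ZMod.stdAddChar (1 : ZMod 12) • etaSq := by
  ext z
  have h1 : ∀ n : ℕ, ModularForm.eta_q n ((1 : ℝ) + z : ℂ) = ModularForm.eta_q n z := by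
    intro n
    simp only [ModularForm.eta_q]
    congr 1
    simp [Function.Periodic.qParam, mul_add, Complex.exp_add]
  have h2 : Function.Periodic.qParam 24 ((1 : ℝ) + z : ℂ) ^ 2 = ZMod.stdAddChar (1 : ZMod 12) * Function.Periodic.qParam 24 (z : ℂ) ^ 2 := by
    have := ZMod.stdAddChar_coe (N := 12) 1
    push_cast at this
    rw [this]
    simp only [Function.Periodic.qParam]
    rw [← Complex.exp_nat_mul, ← Complex.exp_nat_mul, ← Complex.exp_add]
    congr 1
    push_cast
    ring
  have h3 : (((1 : ℝ) +ᵥ z : ℍ) : ℂ) = ((1 : ℝ) + z : ℂ) := by simp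
  have h4 : denom (ModularGroup.T : SL(2, ℤ)) z = 1 := by
    rw [ModularGroup.denom_apply]; simp [ModularGroup.coe_T]
  rw [ModularForm.SL_slash_apply, modular_T_smul, h4]
  simp only [etaSq, ModularForm.eta, h3, h1, mul_pow, h2, Pi.smul_apply, smul_eq_mul, one_zpow, mul_one, mul_assoc]

lemma etaSq_S : etaSq ∣[(1 : ℤ)] ModularGroup.S = ZMod.stdAddChar (-3 : ZMod 12) • etaSq := by
  ext z
  have he : ModularForm.eta (-(↑z)⁻¹) = (sqrt I)⁻¹ * (sqrt z * ModularForm.eta z) := by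
    simpa [neg_div] using ModularForm.eta_comp_eq_csqrt_I_inv z.2
  have hs : ∀ w : ℂ, w ≠ 0 → sqrt w ^ 2 = w := by
    intro w hw
    rw [sqrt_eq_exp hw, ← exp_nat_mul]
    push_cast
    rw [mul_div_cancel₀ _ (by norm_num), exp_log hw]
  have h3 : ZMod.stdAddChar (-3 : ZMod 12) = -I := by
    have := ZMod.stdAddChar_coe (N := 12) (-3)
    push_cast at this
    rw [this, show 2 * (Real.pi : ℂ) * I * -3 / 12 = -(Real.pi / 2 * I) by ring, Complex.exp_neg, exp_pi_div_two_mul_I, inv_I]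
  rw [ModularForm.SL_slash_apply, UpperHalfPlane.modular_S_smul]
  have hz := z.ne_zero
  simp only [ModularGroup.denom_S, Pi.smul_apply, smul_eq_mul, etaSq, h3]
  simp [he, mul_pow, hs, hz]
  field_simp

lemma etaSq_slash (γ : SL(2, ℤ)) : etaSq ∣[(1 : ℤ)] γ =
    ZMod.stdAddChar (etaPhi (γ 0 0 : ZMod 12) (γ 0 1 : ℤ) (γ 1 0 : ℤ) (γ 1 1 : ℤ)) • etaSq := by
  have key : ∀ γ : SL(2, ℤ), (γ 0 0 : ZMod 12) * (γ 1 1 : ℤ) - (γ 0 1 : ℤ) * (γ 1 0 : ℤ) = 1 := by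
    intro γ
    have := γ.det_coe
    rw [Matrix.det_fin_two] at this
    exact_mod_cast congrArg (Int.cast : ℤ → ZMod 12) this
  have hmem : γ ∈ Subgroup.closure {ModularGroup.S, ModularGroup.T} := by
    rw [SpecialLinearGroup.SL2Z_generators]; trivial
  have stepT : ∀ γ : SL(2, ℤ), etaPhi ((γ * ModularGroup.T) 0 0 : ZMod 12) ((γ * ModularGroup.T) 0 1 : ℤ) ((γ * ModularGroup.T) 1 0 : ℤ) ((γ * ModularGroup.T) 1 1 : ℤ) = etaPhi (γ 0 0 : ZMod 12) (γ 0 1 : ℤ) (γ 1 0 : ℤ) (γ 1 1 : ℤ) + 1 := by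
    intro γ
    rw [← (etaPhi_all _ _ _ _ (key γ)).1]
    simp [Matrix.SpecialLinearGroup.coe_mul, ModularGroup.coe_T, Matrix.mul_apply, Fin.sum_univ_two]
  have stepS : ∀ γ : SL(2, ℤ), etaPhi ((γ * ModularGroup.S) 0 0 : ZMod 12) ((γ * ModularGroup.S) 0 1 : ℤ) ((γ * ModularGroup.S) 1 0 : ℤ) ((γ * ModularGroup.S) 1 1 : ℤ) = etaPhi (γ 0 0 : ZMod 12) (γ 0 1 : ℤ) (γ 1 0 : ℤ) (γ 1 1 : ℤ) - 3 := by
    intro γ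
    rw [← (etaPhi_all _ _ _ _ (key γ)).2.1]
    simp [Matrix.SpecialLinearGroup.coe_mul, ModularGroup.coe_S, Matrix.mul_apply, Fin.sum_univ_two]
  have main : ∀ (g : SL(2, ℤ)) (e : ZMod 12) (γ : SL(2, ℤ)), etaSq ∣[(1 : ℤ)] g = ZMod.stdAddChar e • etaSq →
      (etaSq ∣[(1 : ℤ)] γ = ZMod.stdAddChar (etaPhi (γ 0 0 : ZMod 12) (γ 0 1 : ℤ) (γ 1 0 : ℤ) (γ 1 1 : ℤ)) • etaSq) →
      etaSq ∣[(1 : ℤ)] (γ * g) = ZMod.stdAddChar (etaPhi (γ 0 0 : ZMod 12) (γ 0 1 : ℤ) (γ 1 0 : ℤ) (γ 1 1 : ℤ) + e) • etaSq := by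
    intro g e γ hg hγ
    rw [SlashAction.slash_mul, hγ, ModularForm.SL_smul_slash, hg, smul_smul, AddChar.map_add_eq_mul]
  have inv : ∀ (g : SL(2, ℤ)) (e : ZMod 12), etaSq ∣[(1 : ℤ)] g = ZMod.stdAddChar e • etaSq →
      etaSq ∣[(1 : ℤ)] g⁻¹ = ZMod.stdAddChar (-e) • etaSq := by
    intro g e hg
    have h1 : (ZMod.stdAddChar e • etaSq) ∣[(1 : ℤ)] g⁻¹ = etaSq := by
      rw [← hg, ← SlashAction.slash_mul, mul_inv_cancel, SlashAction.slash_one]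
    rw [ModularForm.SL_smul_slash] at h1
    conv_rhs => rw [← h1]
    rw [smul_smul, ← AddChar.map_add_eq_mul, neg_add_cancel, AddChar.map_zero_eq_one, one_smul]
  induction hmem using Subgroup.closure_induction_right with
  | one => simp [etaPhi]
  | mul_right x hx y hy ih =>
    rcases hy with rfl | rfl
    · rw [main _ _ x etaSq_S ih, stepS, sub_eq_add_neg]
    · rw [main _ _ x etaSq_T ih, stepT]
  | mul_inv_cancel x hx y hy ih =>
    rcases hy with rfl | rfl
    · rw [main _ _ x (inv _ _ etaSq_S) ih]
      have := stepS (x * ModularGroup.S⁻¹)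
      rw [inv_mul_cancel_right] at this
      rw [this]; congr 2; ring
    · rw [main _ _ x (inv _ _ etaSq_T) ih]
      have := stepT (x * ModularGroup.T⁻¹)
      rw [inv_mul_cancel_right] at this
      rw [this]; congr 2; ring

end

section

open UpperHalfPlane hiding I
open scoped MatrixGroups ModularForm

lemma eta_sq_moebius (γ : SL(2, ℤ)) (τ : ℂ) (hτ : 0 < τ.im) :
    ModularForm.eta ((γ 0 0 * τ + γ 0 1) / (γ 1 0 * τ + γ 1 1)) ^ 2 =
    ZMod.stdAddChar (etaPhi (γ 0 0 : ZMod 12) (γ 0 1 : ℤ) (γ 1 0 : ℤ) (γ 1 1 : ℤ)) *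
      (γ 1 0 * τ + γ 1 1) * ModularForm.eta τ ^ 2 := by
  have h := congrFun (etaSq_slash γ) ⟨τ, hτ⟩
  have hd : denom (γ : SL(2, ℤ)) (⟨τ, hτ⟩ : ℍ) = γ 1 0 * τ + γ 1 1 := by
    rw [ModularGroup.denom_apply]
  have hne := denom_ne_zero (γ : SL(2, ℤ)) (⟨τ, hτ⟩ : ℍ)
  rw [ModularForm.SL_slash_apply, hd] at h
  rw [hd] at hne
  have hs : ((γ • (⟨τ, hτ⟩ : ℍ) : ℍ) : ℂ) = (γ 0 0 * τ + γ 0 1) / (γ 1 0 * τ + γ 1 1) := by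
    rw [UpperHalfPlane.coe_specialLinearGroup_apply]; simp
  simp only [etaSq, hs, Pi.smul_apply, smul_eq_mul, zpow_neg, zpow_one] at h
  rw [← div_eq_mul_inv, div_eq_iff hne] at h
  rw [h]; ring

lemma im_eleven {τ : ℂ} (hτ : 0 < τ.im) : 0 < (11 * τ).im := by
  simp [hτ]

lemma qq_norm_lt {τ : ℂ} (hτ : 0 < τ.im) : ‖qq τ‖ < 1 := by
  simpa [qq] using norm_exp_two_pi_I_lt_one ⟨τ, hτ⟩

/-- Euler product. -/
def eulerP (q : ℂ) : ℂ := ∏' n : ℕ, (1 - q ^ (n + 1))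

/-- The product part of the newform as function of `q`. -/
def Fq (q : ℂ) : ℂ := ∏' n : ℕ, ((1 - q ^ (n + 1)) ^ 2 * (1 - q ^ (11 * (n + 1))) ^ 2)

lemma Fq_eq {q : ℂ} (hq : ‖q‖ < 1) : Fq q = eulerP q ^ 2 * eulerP (q ^ 11) ^ 2 := by
  have h1 := ModularForm.multipliable_one_sub_pow hq
  have h2 := ModularForm.multipliable_one_sub_pow (q := q ^ 11) (by
    rw [norm_pow]; exact pow_lt_one₀ (norm_nonneg _) hq (by norm_num))
  rw [Fq, eulerP, eulerP, ← h1.tprod_pow, ← h2.tprod_pow, ← Multipliable.tprod_mul (h1.pow 2) (h2.pow 2)]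
  simp only [pow_mul]

lemma f11_eq {τ : ℂ} (hτ : 0 < τ.im) :
    f11 τ = ModularForm.eta τ ^ 2 * ModularForm.eta (11 * τ) ^ 2 := by
  have h1 : ∀ t : ℂ, ∏' n : ℕ, (1 - ModularForm.eta_q n t) = eulerP (qq t) := by
    intro t
    simp only [eulerP, ModularForm.eta_q_eq_pow, qq]
  have h2 : qq (11 * τ) = qq τ ^ 11 := by
    simp only [qq, ← Complex.exp_nat_mul]; congr 1; push_cast; ring
  have h3 : Function.Periodic.qParam 24 τ ^ 2 * Function.Periodic.qParam 24 (11 * τ) ^ 2 = qq τ := by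
    simp only [Function.Periodic.qParam, qq, ← Complex.exp_nat_mul, ← Complex.exp_add]
    congr 1; push_cast; ring
  have h4 : f11 τ = qq τ * Fq (qq τ) := rfl
  rw [h4, Fq_eq (qq_norm_lt hτ), ModularForm.eta, ModularForm.eta, h1, h1, h2]
  linear_combination (-eulerP (qq τ) ^ 2 * eulerP (qq τ ^ 11) ^ 2) * h3

lemma f11_ne_zero {τ : ℂ} (hτ : 0 < τ.im) : f11 τ ≠ 0 := by
  rw [f11_eq hτ]
  exact mul_ne_zero (pow_ne_zero _ (ModularForm.eta_ne_zero hτ))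
    (pow_ne_zero _ (ModularForm.eta_ne_zero (im_eleven hτ)))

lemma f11_gamma (γ : SL(2, ℤ)) (h11 : (11 : ℤ) ∣ γ 1 0) (τ : ℂ) (hτ : 0 < τ.im) :
    f11 ((γ 0 0 * τ + γ 0 1) / (γ 1 0 * τ + γ 1 1)) = (γ 1 0 * τ + γ 1 1) ^ 2 * f11 τ := by
  obtain ⟨c', hc⟩ := h11
  have hdet : γ 0 0 * γ 1 1 - γ 0 1 * γ 1 0 = 1 := by
    have := γ.det_coe
    rwa [Matrix.det_fin_two] at this
  let γ' : SL(2, ℤ) := ⟨!![γ 0 0, 11 * γ 0 1; c', γ 1 1], by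
    rw [Matrix.det_fin_two_of]; rw [hc] at hdet; linarith⟩
  have e1 := eta_sq_moebius γ τ hτ
  have e2 := eta_sq_moebius γ' (11 * τ) (im_eleven hτ)
  have a1 : γ' 0 0 = γ 0 0 := rfl
  have a2 : γ' 0 1 = 11 * γ 0 1 := rfl
  have a3 : γ' 1 0 = c' := rfl
  have a4 : γ' 1 1 = γ 1 1 := rfl
  rw [a1, a2, a3, a4] at e2
  have himage : 0 < ((γ 0 0 * τ + γ 0 1) / (γ 1 0 * τ + γ 1 1) : ℂ).im := by
    have hs : ((γ • (⟨τ, hτ⟩ : ℍ) : ℍ) : ℂ) = (γ 0 0 * τ + γ 0 1) / (γ 1 0 * τ + γ 1 1) := by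
      rw [UpperHalfPlane.coe_specialLinearGroup_apply]; simp
    rw [← hs]; exact (γ • (⟨τ, hτ⟩ : ℍ)).2
  rw [f11_eq himage, f11_eq hτ, e1]
  have e3 : 11 * ((γ 0 0 * τ + γ 0 1) / (γ 1 0 * τ + γ 1 1)) =
      (γ 0 0 * (11 * τ) + (11 * γ 0 1 : ℤ)) / (c' * (11 * τ) + γ 1 1) := by
    rw [hc]; push_cast; rw [mul_div_assoc']; congr 1 <;> ring
  rw [e3, e2, hc]
  have t11 : (11 : ZMod 12) = -1 := by decide
  have hchar : ZMod.stdAddChar (etaPhi (γ 0 0 : ZMod 12) (γ 0 1 : ℤ) ((11 * c' : ℤ) : ZMod 12) (γ 1 1 : ℤ)) *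
      ZMod.stdAddChar (etaPhi (γ 0 0 : ZMod 12) ((11 * γ 0 1 : ℤ) : ZMod 12) (c' : ZMod 12) (γ 1 1 : ℤ)) = 1 := by
    rw [← AddChar.map_add_eq_mul]
    have := (etaPhi_all (γ 0 0 : ZMod 12) (γ 0 1 : ℤ) ((11 * c' : ℤ) : ZMod 12) (γ 1 1 : ℤ) (by
      rw [← hc]; exact_mod_cast congrArg (Int.cast : ℤ → ZMod 12) hdet)).2.2
    rw [← AddChar.map_zero_eq_one (ZMod.stdAddChar (N := 12)), ← this]
    congr 3
    · push_cast; rw [t11]; ring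
    · push_cast; rw [t11]; ring
  push_cast
  push_cast at hchar
  linear_combination (11 * c' * τ + γ 1 1) ^ 2 * ModularForm.eta τ ^ 2 * ModularForm.eta (11 * τ) ^ 2 * hchar

lemma fricke_im {τ : ℂ} (hτ : 0 < τ.im) : 0 < (-1 / (11 * τ)).im := by
  have := UpperHalfPlane.im_inv_neg_coe_pos ⟨11 * τ, im_eleven hτ⟩
  rw [inv_neg, ← one_div, ← neg_div] at this
  exact this

lemma eta_sq_S {τ : ℂ} (hτ : 0 < τ.im) : ModularForm.eta (-1 / τ) ^ 2 = -I * τ * ModularForm.eta τ ^ 2 := by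
  have he := ModularForm.eta_comp_eq_csqrt_I_inv hτ
  have hτ0 : τ ≠ 0 := by rintro rfl; simp at hτ
  have hs : ∀ w : ℂ, w ≠ 0 → sqrt w ^ 2 = w := by
    intro w hw
    rw [sqrt_eq_exp hw, ← exp_nat_mul]
    push_cast
    rw [mul_div_cancel₀ _ (by norm_num), exp_log hw]
  simp only [Function.comp_apply, Pi.smul_apply, Pi.mul_apply, smul_eq_mul] at he
  rw [he, mul_pow, mul_pow, inv_pow, hs _ hτ0, hs _ I_ne_zero, inv_I]; ring

lemma f11_fricke (τ : ℂ) (hτ : 0 < τ.im) : f11 (-1 / (11 * τ)) = -11 * τ ^ 2 * f11 τ := by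
  have hτ0 : τ ≠ 0 := by rintro rfl; simp at hτ
  rw [f11_eq (fricke_im hτ), f11_eq hτ, eta_sq_S (im_eleven hτ),
    show 11 * (-1 / (11 * τ)) = -1 / τ by field_simp, eta_sq_S hτ]
  linear_combination (11 * τ ^ 2 * ModularForm.eta τ ^ 2 * ModularForm.eta (11 * τ) ^ 2) * I_sq

end

section

lemma isOpen_im_pos : IsOpen {z : ℂ | 0 < z.im} := isOpen_lt continuous_const Complex.continuous_im

lemma nderiv_differentiableOn {f : ℂ → ℂ} (hf : DifferentiableOn ℂ f {z : ℂ | 0 < z.im}) :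
    DifferentiableOn ℂ (nderiv f) {z : ℂ | 0 < z.im} :=
  (hf.deriv isOpen_im_pos).const_mul _

lemma I2_differentiableOn {f : ℂ → ℂ} (hf : DifferentiableOn ℂ f {z : ℂ | 0 < z.im})
    (h0 : ∀ z : ℂ, 0 < z.im → f z ≠ 0) :
    DifferentiableOn ℂ (I2 f) {z : ℂ | 0 < z.im} := by
  have h1 := nderiv_differentiableOn hf
  have h2 := nderiv_differentiableOn h1
  unfold I2
  exact DifferentiableOn.div (by fun_prop) (by fun_prop) (fun z hz => pow_ne_zero _ (h0 z hz))

lemma J2_differentiableOn {f : ℂ → ℂ} (hf : DifferentiableOn ℂ f {z : ℂ | 0 < z.im})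
    (h0 : ∀ z : ℂ, 0 < z.im → f z ≠ 0) :
    DifferentiableOn ℂ (J2 f) {z : ℂ | 0 < z.im} := by
  have h1 := nderiv_differentiableOn hf
  have h2 := nderiv_differentiableOn h1
  have h3 := nderiv_differentiableOn h2
  unfold J2
  exact DifferentiableOn.div (by fun_prop) (by fun_prop) (fun z hz => pow_ne_zero _ (h0 z hz))

lemma two_pi_I_inv_ne : (2 * Real.pi * Complex.I : ℂ)⁻¹ ≠ 0 := by
  simp [Real.pi_ne_zero]

/-- `HasDerivAt` from `nderiv`. -/
lemma hasDerivAt_nderiv {f : ℂ → ℂ} (hf : DifferentiableOn ℂ f {z : ℂ | 0 < z.im}) {τ : ℂ}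
    (hτ : 0 < τ.im) : HasDerivAt f ((2 * Real.pi * Complex.I) * nderiv f τ) τ := by
  have := (hf.differentiableAt (isOpen_im_pos.mem_nhds hτ)).hasDerivAt
  have e : (2 * Real.pi * Complex.I) * nderiv f τ = deriv f τ := by
    unfold nderiv
    rw [← mul_assoc, mul_inv_cancel₀ (by simp [Real.pi_ne_zero]), one_mul]
  rw [e]; exact this

lemma J2_eq {f : ℂ → ℂ} (hf : DifferentiableOn ℂ f {z : ℂ | 0 < z.im})
    (h0 : ∀ z : ℂ, 0 < z.im → f z ≠ 0) {τ : ℂ} (hτ : 0 < τ.im) :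
    J2 f τ = 2 * nderiv (I2 f) τ / f τ := by
  have h1 := nderiv_differentiableOn hf
  have h2 := nderiv_differentiableOn h1
  have d0 := hasDerivAt_nderiv hf hτ
  have d1 := hasDerivAt_nderiv h1 hτ
  have d2 := hasDerivAt_nderiv h2 hτ
  have hne := h0 τ hτ
  have hd := (((d0.const_mul 2).mul d2).sub ((d1.pow 2).const_mul 3)).div (d0.pow 4) (pow_ne_zero 4 hne)
  have e : I2 f = ((fun y => 2 * f y) * nderiv (nderiv f) - fun y => 3 * (nderiv f ^ 2) y) / f ^ 4 := by
    ext z; simp [I2]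
  rw [← e] at hd
  have hd' := hd.deriv
  have hpi : (2 * Real.pi * Complex.I : ℂ) ≠ 0 := by simp [Real.pi_ne_zero]
  rw [nderiv, hd', J2]
  simp only [Pi.mul_apply, Pi.pow_apply, Pi.sub_apply]
  generalize (2 * Real.pi * Complex.I : ℂ) = p at *
  field_simp
  push_cast
  ring

/-- Invariance of `I₂`, and `J₂` up to sign, under a Möbius substitution. -/
lemma inv_moebius {f : ℂ → ℂ} (hf : DifferentiableOn ℂ f {z : ℂ | 0 < z.im})
    (h0 : ∀ z : ℂ, 0 < z.im → f z ≠ 0) (a b c d k : ℂ)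
    (hu : ∀ z : ℂ, 0 < z.im → c * z + d ≠ 0)
    (him : ∀ z : ℂ, 0 < z.im → 0 < ((a * z + b) / (c * z + d)).im)
    (hk : (k * (a * d - b * c)) ^ 2 = 1)
    (hfm : ∀ z : ℂ, 0 < z.im → f ((a * z + b) / (c * z + d)) = k * (c * z + d) ^ 2 * f z)
    {τ : ℂ} (hτ : 0 < τ.im) :
    I2 f ((a * τ + b) / (c * τ + d)) = I2 f τ ∧
    J2 f ((a * τ + b) / (c * τ + d)) ^ 2 = J2 f τ ^ 2 := by
  have h1 := nderiv_differentiableOn hf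
  have h2 := nderiv_differentiableOn h1
  have hI := I2_differentiableOn hf h0
  obtain ⟨D, hD⟩ : ∃ D, D = a * d - b * c := ⟨_, rfl⟩
  rw [← hD] at hk
  have hD0 : D ≠ 0 := by rintro rfl; simp at hk
  have hk0 : k ≠ 0 := by rintro rfl; simp at hk
  have hpi : (2 * Real.pi * Complex.I : ℂ) ≠ 0 := by simp [Real.pi_ne_zero]
  have dm : ∀ z : ℂ, 0 < z.im → HasDerivAt (fun z => (a * z + b) / (c * z + d)) (D / (c * z + d) ^ 2) z := by
    intro z hz
    have e1 : HasDerivAt (fun z : ℂ => a * z + b) a z := by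
      simpa using ((hasDerivAt_id z).const_mul a).add_const b
    have e2 : HasDerivAt (fun z : ℂ => c * z + d) c z := by
      simpa using ((hasDerivAt_id z).const_mul c).add_const d
    have := e1.div e2 (hu z hz)
    have e : D / (c * z + d) ^ 2 = (a * (c * z + d) - (a * z + b) * c) / (c * z + d) ^ 2 := by
      rw [hD]; congr 1; ring
    rw [e]; exact this
  have du : ∀ z : ℂ, HasDerivAt (fun z : ℂ => c * z + d) c z := fun z => by
      simpa using ((hasDerivAt_id z).const_mul c).add_const d
  have cmp : ∀ (g r : ℂ → ℂ) (r' : ℂ) (z : ℂ), DifferentiableOn ℂ g {z : ℂ | 0 < z.im} → 0 < z.im →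
      (∀ w : ℂ, 0 < w.im → g ((a * w + b) / (c * w + d)) = r w) → HasDerivAt r r' z →
      (2 * Real.pi * Complex.I) * nderiv g ((a * z + b) / (c * z + d)) * (D / (c * z + d) ^ 2) = r' := by
    intro g r r' z hg hz hgr hr
    have e1 := (hasDerivAt_nderiv hg (him z hz)).comp z (dm z hz)
    refine e1.unique (hr.congr_of_eventuallyEq ?_)
    filter_upwards [isOpen_im_pos.mem_nhds hz] with w hw using hgr w hw
  have f1 : ∀ z : ℂ, 0 < z.im → nderiv f ((a * z + b) / (c * z + d)) =
      k / D * (2 * (c / (2 * Real.pi * Complex.I)) * (c * z + d) ^ 3 * f z + (c * z + d) ^ 4 * nderiv f z) := by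
    intro z hz
    have hr := (((du z).pow 2).const_mul k).mul (hasDerivAt_nderiv hf hz)
    have := cmp f _ _ z hf hz hfm hr
    have huz := hu z hz
    simp only [Pi.pow_apply] at this
    generalize (2 * Real.pi * Complex.I : ℂ) = p at *
    generalize nderiv f ((a * z + b) / (c * z + d)) = X at *
    generalize c * z + d = u at *
    field_simp
    field_simp at this
    push_cast at this
    linear_combination this
  have f2 : ∀ z : ℂ, 0 < z.im → nderiv (nderiv f) ((a * z + b) / (c * z + d)) =
      k / D ^ 2 * (6 * (c / (2 * Real.pi * Complex.I)) ^ 2 * (c * z + d) ^ 4 * f z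
        + 6 * (c / (2 * Real.pi * Complex.I)) * (c * z + d) ^ 5 * nderiv f z
        + (c * z + d) ^ 6 * nderiv (nderiv f) z) := by
    intro z hz
    have hr := (((((du z).pow 3).const_mul (2 * (c / (2 * Real.pi * Complex.I)))).mul (hasDerivAt_nderiv hf hz)).add
      (((du z).pow 4).mul (hasDerivAt_nderiv h1 hz))).const_mul (k / D)
    have := cmp (nderiv f) _ _ z h1 hz f1 hr
    have huz := hu z hz
    simp only [Pi.pow_apply] at this
    generalize (2 * Real.pi * Complex.I : ℂ) = p at *
    generalize nderiv (nderiv f) ((a * z + b) / (c * z + d)) = X at *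
    generalize c * z + d = u at *
    field_simp
    field_simp at this
    push_cast at this
    linear_combination this
  have hII : ∀ z : ℂ, 0 < z.im → I2 f ((a * z + b) / (c * z + d)) = I2 f z := by
    intro z hz
    have huz := hu z hz
    have hfz := h0 z hz
    rw [I2, I2, f1 z hz, f2 z hz, hfm z hz]
    generalize (2 * Real.pi * Complex.I : ℂ) = p at *
    generalize c * z + d = u at *
    have hk' : k ^ 2 * D ^ 2 = 1 := by rw [← mul_pow]; exact hk
    rw [div_eq_div_iff (by positivity) (by positivity)]
    field_simp
    linear_combination (u ^ 2 * p ^ 2 * (-2 * f z * nderiv (nderiv f) z + 3 * nderiv f z ^ 2)) * hk'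
  refine ⟨hII τ hτ, ?_⟩
  have := cmp (I2 f) (I2 f) _ τ hI hτ hII (hasDerivAt_nderiv hI hτ)
  have huz := hu τ hτ
  have hfz := h0 τ hτ
  have this' : nderiv (I2 f) ((a * τ + b) / (c * τ + d)) = nderiv (I2 f) τ * (c * τ + d) ^ 2 / D := by
    generalize nderiv (I2 f) ((a * τ + b) / (c * τ + d)) = X at *
    generalize c * τ + d = u at *
    field_simp
    field_simp at this
    linear_combination this
  rw [J2_eq hf h0 hτ, J2_eq hf h0 (him τ hτ), hfm τ hτ, this']
  have hk' : k ^ 2 * D ^ 2 = 1 := by rw [← mul_pow]; exact hk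
  field_simp
  linear_combination (-nderiv (I2 f) τ ^ 2) * hk'

end

section

open Filter Topology

/-- Evaluation of an integer coefficient list as a polynomial. -/
def lev : List ℤ → ℂ → ℂ
  | [], _ => 0
  | a :: l, q => a + q * lev l q

/-- Sum of coefficient lists. -/
def ladd : List ℤ → List ℤ → List ℤ
  | [], m => m
  | a :: l, [] => a :: l
  | a :: l, b :: m => (a + b) :: ladd l m

/-- Scalar multiple of a coefficient list. -/
def lsmul (c : ℤ) : List ℤ → List ℤ
  | [] => []
  | a :: l => (c * a) :: lsmul c l

/-- Product of coefficient lists. -/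
def lmul : List ℤ → List ℤ → List ℤ
  | [], _ => []
  | a :: l, m => ladd (lsmul a m) (0 :: lmul l m)

/-- The operator `g ↦ g + q g'` on coefficient lists. -/
def ltheta : List ℤ → List ℤ
  | [] => []
  | a :: l => a :: ladd l (ltheta l)

lemma lev_ladd (l m : List ℤ) (q : ℂ) : lev (ladd l m) q = lev l q + lev m q := by
  induction l generalizing m with
  | nil => simp [ladd, lev]
  | cons a l ih =>
    cases m with
    | nil => simp [ladd, lev]
    | cons b m => simp only [ladd, lev, ih]; push_cast; ring

lemma lev_lsmul (c : ℤ) (l : List ℤ) (q : ℂ) : lev (lsmul c l) q = c * lev l q := by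
  induction l with
  | nil => simp [lsmul, lev]
  | cons a l ih => simp only [lsmul, lev, ih]; push_cast; ring

lemma lev_lmul (l m : List ℤ) (q : ℂ) : lev (lmul l m) q = lev l q * lev m q := by
  induction l with
  | nil => simp [lmul, lev]
  | cons a l ih => simp only [lmul, lev, lev_ladd, lev_lsmul, ih]; push_cast; ring

lemma lev_take (n : ℕ) (l : List ℤ) (q : ℂ) :
    lev l q = lev (l.take n) q + q ^ n * lev (l.drop n) q := by
  induction n generalizing l with
  | zero => simp [lev]
  | succ n ih =>
    cases l with
    | nil => simp [lev]
    | cons a l => simp only [List.take_succ_cons, List.drop_succ_cons, lev]; rw [ih l]; ring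

lemma differentiable_lev (l : List ℤ) : Differentiable ℂ (lev l) := by
  induction l with
  | nil => exact differentiable_const 0
  | cons a l ih =>
    change Differentiable ℂ (fun q => (a : ℂ) + q * lev l q)
    fun_prop

lemma analyticAt_lev (l : List ℤ) (z : ℂ) : AnalyticAt ℂ (lev l) z :=
  (differentiable_lev l).analyticAt z

lemma lev_ltheta (l : List ℤ) (q : ℂ) : lev (ltheta l) q = lev l q + q * deriv (lev l) q := by
  induction l generalizing q with
  | nil =>
    have : lev [] = fun _ => 0 := by ext; rfl
    simp [ltheta, this]
  | cons a l ih =>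
    have e : lev (a :: l) = fun q => (a : ℂ) + q * lev l q := by ext; rfl
    have hd : HasDerivAt (lev (a :: l)) (1 * lev l q + q * deriv (lev l) q) q := by
      rw [e]
      exact ((hasDerivAt_id q).mul ((differentiable_lev l) q).hasDerivAt).const_add _
    rw [hd.deriv]
    simp only [ltheta, lev, lev_ladd, ih]
    ring

/-- `g` has the list `l` as expansion modulo `q¹³`. -/
def QRep (g : ℂ → ℂ) (l : List ℤ) : Prop :=
  ∃ h : ℂ → ℂ, AnalyticAt ℂ h 0 ∧ ∀ᶠ q in 𝓝 (0 : ℂ), g q = lev l q + q ^ 13 * h q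

lemma QRep.trunc {g : ℂ → ℂ} {l : List ℤ} (hg : QRep g l) : QRep g (l.take 13) := by
  obtain ⟨h, ha, he⟩ := hg
  refine ⟨fun q => lev (l.drop 13) q + h q, (analyticAt_lev _ _).add ha, ?_⟩
  filter_upwards [he] with q hq
  rw [hq, lev_take 13 l q]; ring

lemma rep_lev (l : List ℤ) : QRep (lev l) l :=
  ⟨fun _ => 0, analyticAt_const, by simp⟩

lemma QRep.mul {g k : ℂ → ℂ} {l m : List ℤ} (hg : QRep g l) (hk : QRep k m) :
    QRep (fun q => g q * k q) ((lmul l m).take 13) := by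
  apply QRep.trunc
  obtain ⟨h, ha, he⟩ := hg
  obtain ⟨h', ha', he'⟩ := hk
  refine ⟨fun q => h q * lev m q + h' q * lev l q + q ^ 13 * (h q * h' q), ?_, ?_⟩
  · have := analyticAt_lev l 0
    have := analyticAt_lev m 0
    fun_prop
  · filter_upwards [he, he'] with q h1 h2
    rw [h1, h2, lev_lmul]; ring

lemma QRep.add {g k : ℂ → ℂ} {l m : List ℤ} (hg : QRep g l) (hk : QRep k m) :
    QRep (fun q => g q + k q) (ladd l m) := by
  obtain ⟨h, ha, he⟩ := hg
  obtain ⟨h', ha', he'⟩ := hk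
  refine ⟨fun q => h q + h' q, ha.add ha', ?_⟩
  filter_upwards [he, he'] with q h1 h2
  rw [h1, h2, lev_ladd]; ring

lemma QRep.smul {g : ℂ → ℂ} {l : List ℤ} (c : ℤ) (hg : QRep g l) :
    QRep (fun q => c * g q) (lsmul c l) := by
  obtain ⟨h, ha, he⟩ := hg
  refine ⟨fun q => c * h q, analyticAt_const.mul ha, ?_⟩
  filter_upwards [he] with q h1
  rw [h1, lev_lsmul]; ring

/-- The operator `g ↦ g + q g'`. -/
def thetaOp (g : ℂ → ℂ) : ℂ → ℂ := fun q => g q + q * deriv g q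

lemma QRep.theta {g : ℂ → ℂ} {l : List ℤ} (hg : QRep g l) : QRep (thetaOp g) (ltheta l) := by
  obtain ⟨h, ha, he⟩ := hg
  refine ⟨fun q => 14 * h q + q * deriv h q, ?_, ?_⟩
  · have := ha.deriv
    fun_prop
  · have hd := EventuallyEq.deriv he
    filter_upwards [he, hd, ha.eventually_analyticAt] with q h1 h2 h3
    rw [thetaOp, h1, h2, lev_ltheta]
    have := (((differentiable_lev l) q).hasDerivAt).add
      ((hasDerivAt_pow 13 q).mul h3.differentiableAt.hasDerivAt)
    have h4 : deriv (fun q => lev l q + q ^ 13 * h q) q = _ := this.deriv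
    rw [h4]
    push_cast
    ring

lemma QRep.congr {g k : ℂ → ℂ} {l : List ℤ} (hg : QRep g l) (h : ∀ᶠ q in 𝓝 (0 : ℂ), k q = g q) :
    QRep k l := by
  obtain ⟨h', ha, he⟩ := hg
  refine ⟨h', ha, ?_⟩
  filter_upwards [he, h] with q h1 h2
  rw [h2, h1]

/-- An analytic function which is `O(qⁿ)` is divisible by `qⁿ`. -/
lemma analytic_div_of_bound {g : ℂ → ℂ} (hg : AnalyticAt ℂ g 0) (n : ℕ) (C : ℝ)
    (hb : ∀ᶠ q in 𝓝 (0 : ℂ), ‖g q‖ ≤ C * ‖q‖ ^ n) :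
    ∃ h : ℂ → ℂ, AnalyticAt ℂ h 0 ∧ ∀ᶠ q in 𝓝 (0 : ℂ), g q = q ^ n * h q := by
  suffices h : (n : ℕ∞) ≤ analyticOrderAt g 0 by
    obtain ⟨k, hk, he⟩ := (natCast_le_analyticOrderAt hg).1 h
    exact ⟨k, hk, by simpa using he⟩
  by_contra hlt
  push Not at hlt
  obtain ⟨m, hm⟩ := ENat.ne_top_iff_exists.1 (ne_top_of_lt hlt)
  rw [← hm] at hlt
  have hmn : m < n := by exact_mod_cast hlt
  obtain ⟨k, hk, hk0, he⟩ := hg.analyticOrderAt_eq_natCast.1 hm.symm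
  apply hk0
  have t1 : Tendsto k (𝓝[≠] 0) (𝓝 (k 0)) := hk.continuousAt.tendsto.mono_left nhdsWithin_le_nhds
  have t2 : Tendsto k (𝓝[≠] 0) (𝓝 0) := by
    have t3 : Tendsto (fun q : ℂ => C * ‖q‖ ^ (n - m)) (𝓝[≠] 0) (𝓝 0) := by
      have : Continuous (fun q : ℂ => C * ‖q‖ ^ (n - m)) := by fun_prop
      have := this.tendsto 0
      simp only [norm_zero, zero_pow (Nat.sub_ne_zero_of_lt hmn), mul_zero] at this
      exact this.mono_left nhdsWithin_le_nhds
    refine squeeze_zero_norm' ?_ t3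
    filter_upwards [nhdsWithin_le_nhds hb, nhdsWithin_le_nhds he, self_mem_nhdsWithin] with q h1 h2 h3
    have hq : 0 < ‖q‖ := norm_pos_iff.2 h3
    rw [h2, sub_zero, smul_eq_mul, norm_mul, norm_pow] at h1
    have : ‖q‖ ^ n = ‖q‖ ^ m * ‖q‖ ^ (n - m) := by rw [← pow_add]; congr 1; omega
    rw [this] at h1
    have hqm : 0 < ‖q‖ ^ m := by positivity
    refine le_of_mul_le_mul_left ?_ hqm
    linarith
  exact tendsto_nhds_unique t1 t2

lemma analyticAt_eulerP : AnalyticAt ℂ eulerP 0 :=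
  ModularForm.differentiableOn_tprod_one_sub_pow.analyticAt (Metric.ball_mem_nhds _ one_pos)

lemma eulerP_tail_bound {q : ℂ} (hq : ‖q‖ ≤ 1 / 2) (N : ℕ) :
    ‖(∏' n : ℕ, (1 - q ^ (n + N + 1))) - 1‖ ≤ 4 * ‖q‖ ^ (N + 1) := by
  have hq1 : ‖q‖ < 1 := by linarith
  have hs : Summable (fun n : ℕ => ‖-q ^ (n + N + 1)‖) := by
    simp only [norm_neg, norm_pow, add_assoc]
    exact (summable_nat_add_iff (N + 1)).2 (summable_geometric_of_lt_one (norm_nonneg _) hq1)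
  have hts : ∑' n : ℕ, ‖-q ^ (n + N + 1)‖ ≤ 2 * ‖q‖ ^ (N + 1) := by
    simp only [norm_neg, norm_pow, add_assoc, pow_add ‖q‖ _ (N + 1)]
    rw [tsum_mul_right, tsum_geometric_of_lt_one (norm_nonneg _) hq1]
    gcongr
    rw [inv_le_comm₀ (by linarith) (by norm_num)]; linarith
  have hm : Multipliable (fun n : ℕ => 1 + -q ^ (n + N + 1)) := multipliable_one_add_of_summable hs
  have ht := (hm.hasProd.sub_const 1).norm
  have hle : ‖(∏' n : ℕ, (1 + -q ^ (n + N + 1))) - 1‖ ≤ Real.exp (2 * ‖q‖ ^ (N + 1)) - 1 := by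
    refine le_of_tendsto ht (Eventually.of_forall fun s => ?_)
    refine (s.norm_prod_one_add_sub_one_le _).trans ?_
    gcongr
    exact (hs.sum_le_tsum s (fun _ _ => norm_nonneg _)).trans hts
  simp only [← sub_eq_add_neg] at hle
  refine hle.trans ?_
  have hx : |2 * ‖q‖ ^ (N + 1)| ≤ 1 := by
    rw [abs_of_nonneg (by positivity)]
    have : ‖q‖ ^ (N + 1) ≤ 1 / 2 := by
      calc ‖q‖ ^ (N + 1) ≤ ‖q‖ ^ 1 := pow_le_pow_of_le_one (norm_nonneg _) hq1.le (by omega)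
        _ ≤ 1 / 2 := by simpa using hq
    linarith
  have := Real.abs_exp_sub_one_le hx
  rw [abs_of_nonneg (a := 2 * ‖q‖ ^ (N + 1)) (by positivity)] at this
  linarith [le_abs_self (Real.exp (2 * ‖q‖ ^ (N + 1)) - 1)]

/-- Coefficients of the partial Euler product. -/
def leuler : ℕ → List ℤ
  | 0 => [1]
  | n + 1 => lmul (leuler n) (1 :: (List.replicate n 0 ++ [-1]))

lemma lev_replicate (n : ℕ) (q : ℂ) : lev (List.replicate n 0 ++ [-1]) q = - q ^ n := by
  induction n with
  | zero => simp [lev]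
  | succ n ih => simp only [List.replicate_succ, List.cons_append, lev, ih]; push_cast; ring

lemma lev_leuler (N : ℕ) (q : ℂ) : lev (leuler N) q = ∏ n ∈ Finset.range N, (1 - q ^ (n + 1)) := by
  induction N with
  | zero => simp [leuler, lev]
  | succ n ih =>
    rw [Finset.prod_range_succ, leuler, lev_lmul, ih]
    congr 1
    simp only [lev, lev_replicate]; push_cast; ring

lemma rep_eulerP : QRep eulerP ((leuler 12).take 13) := by
  apply QRep.trunc
  have h1 : ∀ᶠ q in 𝓝 (0 : ℂ), ‖q‖ ≤ 1 / 2 := by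
    filter_upwards [Metric.ball_mem_nhds (0 : ℂ) (show (0 : ℝ) < 1 / 2 by norm_num)] with q hq
    exact (mem_ball_zero_iff.1 hq).le
  have hbd : ∃ C : ℝ, ∀ᶠ q in 𝓝 (0 : ℂ), ‖lev (leuler 12) q‖ ≤ C := by
    have := (analyticAt_lev (leuler 12) 0).continuousAt.norm
    exact ⟨‖lev (leuler 12) 0‖ + 1, by
      filter_upwards [this.eventually (eventually_le_nhds (lt_add_one _))] with q hq using hq⟩
  obtain ⟨C, hC⟩ := hbd
  obtain ⟨h, ha, he⟩ := analytic_div_of_bound (analyticAt_eulerP.sub (analyticAt_lev (leuler 12) 0)) 13 (C * 4) (by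
    filter_upwards [h1, hC] with q hq hCq
    have hm : Multipliable fun n : ℕ => 1 - q ^ (n + 12 + 1) := by
      simp only [sub_eq_add_neg]
      apply multipliable_one_add_of_summable
      simp only [norm_neg, norm_pow, add_assoc]
      exact (summable_nat_add_iff 13).2 (summable_geometric_of_lt_one (norm_nonneg _) (by linarith))
    have hsplit := Multipliable.prod_mul_tprod_nat_mul' (f := fun n : ℕ => 1 - q ^ (n + 1)) (k := 12) hm
    rw [← lev_leuler] at hsplit
    simp only [Pi.sub_apply]
    rw [eulerP, ← hsplit, show ∀ a b : ℂ, a * b - a = a * (b - 1) by intros; ring, norm_mul, mul_assoc]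
    have := eulerP_tail_bound hq 12
    have hC0 : 0 ≤ C := (norm_nonneg _).trans hCq
    gcongr)
  refine ⟨h, ha, ?_⟩
  filter_upwards [he] with q hq
  simp only [Pi.sub_apply] at hq
  linear_combination hq

lemma rep_eulerP11 : QRep (fun q => eulerP (q ^ 11)) [1, 0, 0, 0, 0, 0, 0, 0, 0, 0, 0, -1, 0] := by
  obtain ⟨h, ha, he⟩ := rep_eulerP
  have e : (leuler 12).take 13 = 1 :: (-1) :: ((leuler 12).take 13).drop 2 := by decide +kernel
  rw [e] at he
  have hc : Tendsto (fun q : ℂ => q ^ 11) (𝓝 0) (𝓝 0) := by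
    have : Continuous (fun q : ℂ => q ^ 11) := by fun_prop
    simpa using this.tendsto 0
  generalize ((leuler 12).take 13).drop 2 = l at he
  refine ⟨fun q => q ^ 9 * lev l (q ^ 11) + q ^ 130 * h (q ^ 11), ?_, ?_⟩
  · have a1 : AnalyticAt ℂ (fun q : ℂ => q ^ 11) 0 := by fun_prop
    have a2 : AnalyticAt ℂ (fun q : ℂ => h (q ^ 11)) 0 :=
      AnalyticAt.fun_comp (by simpa using ha) a1
    have a3 : AnalyticAt ℂ (fun q : ℂ => lev l (q ^ 11)) 0 :=
      AnalyticAt.fun_comp (analyticAt_lev l _) a1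
    have a4 : AnalyticAt ℂ (fun q : ℂ => q ^ 9) 0 := by fun_prop
    have a5 : AnalyticAt ℂ (fun q : ℂ => q ^ 130) 0 := by fun_prop
    exact (a4.mul a3).add (a5.mul a2)
  · filter_upwards [hc.eventually he] with q hq
    rw [hq]
    simp only [lev]
    push_cast
    ring

end

section

open Filter Topology

/-- Numerator of `I₂` in terms of `q`. -/
def NI (q : ℂ) : ℂ :=
  2 * Fq q * thetaOp (thetaOp Fq) q - 3 * thetaOp Fq q ^ 2

/-- Numerator of `J₂` in terms of `q`. -/
def NJ (q : ℂ) : ℂ :=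
  4 * Fq q ^ 2 * thetaOp (thetaOp (thetaOp Fq)) q -
    24 * Fq q * thetaOp Fq q * thetaOp (thetaOp Fq) q + 24 * thetaOp Fq q ^ 3

/-- Denominator. -/
def NZ (q : ℂ) : ℂ := q ^ 2 * Fq q ^ 4

/-- Homogenized relation. -/
def NR (q : ℂ) : ℂ :=
  NJ q ^ 4 + 32 * (NI q - 8 * NZ q) * (NI q ^ 2 + 72 * NI q * NZ q - 944 * NZ q ^ 2) * NJ q ^ 2 +
  256 * (NI q + 8 * NZ q) *
    (NI q ^ 3 + 152 * NI q ^ 2 * NZ q - 704 * NI q * NZ q ^ 2 + 1168 * NZ q ^ 3) *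
    (NI q - 8 * NZ q) ^ 2

lemma eventually_norm_lt_one : ∀ᶠ q in 𝓝 (0 : ℂ), ‖q‖ < 1 := by
  filter_upwards [Metric.ball_mem_nhds (0 : ℂ) one_pos] with q hq
  exact mem_ball_zero_iff.1 hq

/-- Coefficients of `Fq`. -/
def lF : List ℤ := [1, -2, -1, 2, 1, 2, -2, 0, -2, -2, 1, -2, 4]

lemma QRep.of_eq {g : ℂ → ℂ} {l m : List ℤ} (hg : QRep g l) (h : l = m) : QRep g m := h ▸ hg

lemma rep_Fq : QRep Fq lF := by
  have h1 := rep_eulerP.mul rep_eulerP11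
  refine ((h1.mul h1).congr ?_).of_eq (by decide +kernel)
  filter_upwards [eventually_norm_lt_one] with q hq
  rw [Fq_eq hq]; ring

/-- Coefficients of `NI`. -/
def lNI : List ℤ :=
  ladd (lsmul 2 ((lmul lF (ltheta (ltheta lF))).take 13))
    (lsmul (-3) ((lmul (ltheta lF) (ltheta lF)).take 13))

lemma rep_NI : QRep NI lNI := by
  have h := rep_Fq
  refine (((h.mul h.theta.theta).smul 2).add ((h.theta.mul h.theta).smul (-3))).congr
    (Eventually.of_forall fun q => ?_)
  simp only [NI]; push_cast; ring

/-- Coefficients of `NJ`. -/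
def lNJ : List ℤ :=
  ladd (lsmul 4 ((lmul ((lmul lF lF).take 13) (ltheta (ltheta (ltheta lF)))).take 13))
   (ladd (lsmul (-24) ((lmul ((lmul lF (ltheta lF)).take 13) (ltheta (ltheta lF))).take 13))
    (lsmul 24 ((lmul ((lmul (ltheta lF) (ltheta lF)).take 13) (ltheta lF)).take 13)))

lemma rep_NJ : QRep NJ lNJ := by
  have h := rep_Fq
  refine ((((h.mul h).mul h.theta.theta.theta).smul 4).add
    ((((h.mul h.theta).mul h.theta.theta).smul (-24)).add
      (((h.theta.mul h.theta).mul h.theta).smul 24))).congr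
    (Eventually.of_forall fun q => ?_)
  simp only [NJ]; push_cast; ring

/-- Coefficients of `NZ`. -/
def lNZ : List ℤ :=
  (lmul [0, 0, 1] ((lmul ((lmul lF lF).take 13) ((lmul lF lF).take 13)).take 13)).take 13

lemma rep_NZ : QRep NZ lNZ := by
  have h := rep_Fq
  refine ((rep_lev [0, 0, 1]).mul ((h.mul h).mul (h.mul h))).congr
    (Eventually.of_forall fun q => ?_)
  simp only [NZ, lev]; push_cast; ring

lemma NR_div : ∃ k : ℂ → ℂ, AnalyticAt ℂ k 0 ∧ ∀ᶠ q in 𝓝 (0 : ℂ), NR q = q ^ 13 * k q := by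
  have hI := rep_NI
  have hJ := rep_NJ
  have hZ := rep_NZ
  have hD := hI.add (hZ.smul (-8))
  have hJ2 := hJ.mul hJ
  have hI2 := hI.mul hI
  have hIZ := hI.mul hZ
  have hZ2 := hZ.mul hZ
  have hA := hI2.add ((hIZ.smul 72).add (hZ2.smul (-944)))
  have hB := (hI2.mul hI).add (((hI2.mul hZ).smul 152).add
    (((hIZ.mul hZ).smul (-704)).add ((hZ2.mul hZ).smul 1168)))
  have hS := hI.add (hZ.smul 8)
  have hR := (hJ2.mul hJ2).add ((((hD.mul hA).mul hJ2).smul 32).add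
    (((hS.mul hB).mul (hD.mul hD)).smul 256))
  have h := hR.of_eq (m := List.replicate 13 0) (by decide +kernel)
  obtain ⟨k, hk, he⟩ := h
  refine ⟨k, hk, ?_⟩
  filter_upwards [he] with q hq
  simp only [List.replicate, lev] at hq
  push_cast at hq
  simp only [NR]
  linear_combination hq

end

section

open Filter Topology

lemma Fq_differentiableOn : DifferentiableOn ℂ Fq (Metric.ball 0 1) := by
  have h1 : DifferentiableOn ℂ eulerP (Metric.ball 0 1) :=
    ModularForm.differentiableOn_tprod_one_sub_pow
  have h2 : DifferentiableOn ℂ (fun q => eulerP (q ^ 11)) (Metric.ball 0 1) := by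
    refine h1.comp (f := fun q : ℂ => q ^ 11) (by fun_prop) ?_
    intro q hq
    rw [mem_ball_zero_iff] at hq ⊢
    rw [norm_pow]
    exact pow_lt_one₀ (norm_nonneg _) hq (by norm_num)
  refine ((h1.pow 2).mul (h2.pow 2)).congr ?_
  intro q hq
  rw [mem_ball_zero_iff] at hq
  simp [Fq_eq hq]

lemma thetaOp_differentiableOn {G : ℂ → ℂ} (hG : DifferentiableOn ℂ G (Metric.ball 0 1)) :
    DifferentiableOn ℂ (thetaOp G) (Metric.ball 0 1) :=
  hG.add (differentiableOn_id.mul (hG.deriv Metric.isOpen_ball))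

lemma hasDerivAt_qq (τ : ℂ) : HasDerivAt qq (qq τ * (2 * Real.pi * I)) τ := by
  have : HasDerivAt (fun z : ℂ => 2 * Real.pi * I * z) (2 * Real.pi * I) τ := by
    simpa using (hasDerivAt_id τ).const_mul (2 * Real.pi * I : ℂ)
  exact this.cexp

lemma nderiv_qq {G : ℂ → ℂ} (hG : DifferentiableOn ℂ G (Metric.ball 0 1)) {F : ℂ → ℂ}
    (hF : ∀ τ : ℂ, 0 < τ.im → F τ = qq τ * G (qq τ)) (τ : ℂ) (hτ : 0 < τ.im) :
    nderiv F τ = qq τ * thetaOp G (qq τ) := by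
  have hq : qq τ ∈ Metric.ball (0 : ℂ) 1 := mem_ball_zero_iff.2 (qq_norm_lt hτ)
  have hGd := (hG.differentiableAt (Metric.isOpen_ball.mem_nhds hq)).hasDerivAt
  have hd := (hasDerivAt_qq τ).mul (hGd.comp τ (hasDerivAt_qq τ))
  have he : F =ᶠ[𝓝 τ] (qq * (G ∘ qq)) := by
    filter_upwards [isOpen_im_pos.mem_nhds hτ] with z hz
    exact hF z hz
  rw [nderiv, he.deriv_eq, hd.deriv]
  have : (2 * Real.pi * I : ℂ) ≠ 0 := by
    simp [Real.pi_ne_zero]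
  simp only [thetaOp, Function.comp]
  field_simp

lemma f11_differentiableOn : DifferentiableOn ℂ f11 {z : ℂ | 0 < z.im} := by
  intro τ hτ
  have hq : qq τ ∈ Metric.ball (0 : ℂ) 1 := mem_ball_zero_iff.2 (qq_norm_lt hτ)
  have hGd := (Fq_differentiableOn.differentiableAt (Metric.isOpen_ball.mem_nhds hq)).hasDerivAt
  have hd := (hasDerivAt_qq τ).mul (hGd.comp τ (hasDerivAt_qq τ))
  exact hd.differentiableAt.differentiableWithinAt

/-- The relation as a function on the upper half plane. -/
def hrel (τ : ℂ) : ℂ :=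
  J2 f11 τ ^ 4 +
      32 * (I2 f11 τ - 8) * (I2 f11 τ ^ 2 + 72 * I2 f11 τ - 944) * J2 f11 τ ^ 2 +
      256 * (I2 f11 τ + 8) *
        (I2 f11 τ ^ 3 + 152 * I2 f11 τ ^ 2 - 704 * I2 f11 τ + 1168) *
        (I2 f11 τ - 8) ^ 2

lemma hrel_differentiableOn : DifferentiableOn ℂ hrel {z : ℂ | 0 < z.im} := by
  have h1 := I2_differentiableOn f11_differentiableOn (fun τ hτ => f11_ne_zero hτ)
  have h2 := J2_differentiableOn f11_differentiableOn (fun τ hτ => f11_ne_zero hτ)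
  unfold hrel
  fun_prop

lemma hrel_eq (τ : ℂ) (hτ : 0 < τ.im) :
    hrel τ = NR (qq τ) / (qq τ ^ 12 * Fq (qq τ) ^ 24) := by
  have e0 : ∀ τ : ℂ, 0 < τ.im → f11 τ = qq τ * Fq (qq τ) := fun _ _ => rfl
  have d0 := Fq_differentiableOn
  have d1 := thetaOp_differentiableOn d0
  have d2 := thetaOp_differentiableOn d1
  have e1 := nderiv_qq d0 e0
  have e2 := nderiv_qq d1 e1
  have e3 := nderiv_qq d2 e2
  have hq : qq τ ≠ 0 := Complex.exp_ne_zero _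
  have hF : Fq (qq τ) ≠ 0 := by
    intro h
    exact f11_ne_zero hτ (by rw [e0 τ hτ, h, mul_zero])
  have hI : I2 f11 τ = NI (qq τ) / NZ (qq τ) := by
    rw [I2, e0 τ hτ, e1 τ hτ, e2 τ hτ, NI, NZ]
    field_simp
  have hJ : J2 f11 τ = NJ (qq τ) / (qq τ ^ 3 * Fq (qq τ) ^ 6) := by
    rw [J2, e0 τ hτ, e1 τ hτ, e2 τ hτ, e3 τ hτ, NJ]
    field_simp
  rw [hrel, hI, hJ, NR]
  generalize NI (qq τ) = x
  generalize NJ (qq τ) = y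
  rw [NZ]
  field_simp

lemma tendsto_hrel : Tendsto hrel (comap Complex.im atTop) (𝓝 0) := by
  obtain ⟨k, hk, he⟩ := NR_div
  have hq : Tendsto qq (comap Complex.im atTop) (𝓝 0) := by
    have := Function.Periodic.qParam_tendsto (h := 1) one_pos
    refine (this.mono_right nhdsWithin_le_nhds).congr fun τ => ?_
    simp [Function.Periodic.qParam, qq]
  have hF : ContinuousAt Fq 0 :=
    (Fq_differentiableOn.differentiableAt (Metric.ball_mem_nhds _ one_pos)).continuousAt
  have hF0 : Fq 0 = 1 := by simp [Fq]
  have ht : Tendsto (fun q => q * k q / Fq q ^ 24) (𝓝 0) (𝓝 0) := by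
    have : ContinuousAt (fun q => q * k q / Fq q ^ 24) 0 :=
      (continuousAt_id.mul hk.continuousAt).div (hF.pow 24) (by simp [hF0])
    simpa using this.tendsto
  refine (ht.comp hq).congr' ?_
  filter_upwards [hq.eventually he, (tendsto_comap (f := Complex.im)).eventually (eventually_gt_atTop 0)] with τ h1 h2
  have hq0 : qq τ ≠ 0 := Complex.exp_ne_zero _
  rw [hrel_eq τ h2, h1]
  simp only [Function.comp]
  rw [pow_succ (qq τ) 12, mul_assoc, mul_div_mul_left _ _ (pow_ne_zero _ hq0)]

lemma hrel_moebius (a b c d k : ℂ)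
    (hu : ∀ z : ℂ, 0 < z.im → c * z + d ≠ 0)
    (him : ∀ z : ℂ, 0 < z.im → 0 < ((a * z + b) / (c * z + d)).im)
    (hk : (k * (a * d - b * c)) ^ 2 = 1)
    (hfm : ∀ z : ℂ, 0 < z.im → f11 ((a * z + b) / (c * z + d)) = k * (c * z + d) ^ 2 * f11 z)
    {τ : ℂ} (hτ : 0 < τ.im) : hrel ((a * τ + b) / (c * τ + d)) = hrel τ := by
  obtain ⟨h1, h2⟩ := inv_moebius f11_differentiableOn (fun τ hτ => f11_ne_zero hτ)
    a b c d k hu him hk hfm hτ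
  have e : ∀ x : ℂ, x ^ 4 = (x ^ 2) ^ 2 := fun x => by ring
  simp only [hrel, h1, h2, e]

lemma hrel_gamma (γ : Matrix.SpecialLinearGroup (Fin 2) ℤ) (h11 : (11 : ℤ) ∣ γ 1 0) (τ : ℂ)
    (hτ : 0 < τ.im) :
    hrel ((γ 0 0 * τ + γ 0 1) / (γ 1 0 * τ + γ 1 1)) = hrel τ := by
  have hdet : γ 0 0 * γ 1 1 - γ 0 1 * γ 1 0 = 1 := by
    have := γ.det_coe
    rwa [Matrix.det_fin_two] at this
  have hdet' : (γ 0 0 * γ 1 1 - γ 0 1 * γ 1 0 : ℂ) = 1 := by exact_mod_cast hdet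
  refine hrel_moebius _ _ _ _ 1 ?_ ?_ ?_ ?_ hτ
  · intro z hz
    have := UpperHalfPlane.denom_ne_zero (γ : Matrix.SpecialLinearGroup (Fin 2) ℤ) (⟨z, hz⟩ : UpperHalfPlane)
    rwa [ModularGroup.denom_apply] at this
  · intro z hz
    have := (γ • (⟨z, hz⟩ : UpperHalfPlane)).im_pos
    rw [← UpperHalfPlane.coe_im, UpperHalfPlane.coe_specialLinearGroup_apply] at this
    simpa using this
  · rw [hdet']; norm_num
  · intro z hz
    rw [f11_gamma γ h11 z hz, one_mul]

lemma hrel_fricke (τ : ℂ) (hτ : 0 < τ.im) : hrel (-1 / (11 * τ)) = hrel τ := by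
  have := hrel_moebius 0 (-1) 11 0 (-1 / 11) ?_ ?_ ?_ ?_ hτ
  · simpa using this
  · intro z hz h
    have h0 : z ≠ 0 := by rintro rfl; simp at hz
    simp [h0] at h
  · intro z hz
    simpa using fricke_im hz
  · norm_num
  · intro z hz
    have := f11_fricke z hz
    simp only [zero_mul, zero_add, add_zero]
    rw [this]; ring

open UpperHalfPlane hiding I
open scoped MatrixGroups ModularForm

/-- The relation as a function on `ℍ`. -/
def hrelH (τ : ℍ) : ℂ := hrel τ

lemma hrelH_zero : IsZeroAtImInfty hrelH := by
  have h : Tendsto (fun τ : ℍ => (τ : ℂ)) atImInfty (comap Complex.im atTop) :=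
    tendsto_comap_iff.2 tendsto_comap
  exact tendsto_hrel.comp h

lemma coe_moebius (γ : SL(2, ℤ)) (τ : ℍ) :
    ((γ • τ : ℍ) : ℂ) = (γ 0 0 * τ + γ 0 1) / (γ 1 0 * τ + γ 1 1) := by
  rw [UpperHalfPlane.coe_specialLinearGroup_apply]
  simp

lemma hrelH_slash (γ : SL(2, ℤ)) : IsZeroAtImInfty (hrelH ∣[(0 : ℤ)] γ) := by
  by_cases h11 : (11 : ℤ) ∣ γ 1 0
  · refine hrelH_zero.congr fun τ => ?_
    rw [ModularForm.SL_slash_apply]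
    simp only [hrelH, coe_moebius, hrel_gamma γ h11 τ τ.im_pos]
    simp
  · have hdet : γ 0 0 * γ 1 1 - γ 0 1 * γ 1 0 = 1 := by
      have := γ.det_coe
      rwa [Matrix.det_fin_two] at this
    have hcop : IsCoprime (11 : ℤ) (γ 1 0) :=
      (Prime.coprime_iff_not_dvd (by norm_num : Prime (11 : ℤ))).2 h11
    obtain ⟨v, u, huv⟩ := hcop
    obtain ⟨j, hj⟩ : ∃ j, j = u * γ 1 1 := ⟨_, rfl⟩
    let γ' : SL(2, ℤ) := ⟨!![γ 0 0 * j - γ 0 1, γ 0 0; γ 1 0 * j - γ 1 1, γ 1 0], by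
      rw [Matrix.det_fin_two_of]; linarith⟩
    have hd : (11 : ℤ) ∣ γ' 1 0 := by
      refine ⟨-(v * γ 1 1), ?_⟩
      change γ 1 0 * j - γ 1 1 = _
      rw [hj]; linear_combination γ 1 1 * huv
    have ht : Tendsto (fun τ : ℍ => ((τ : ℂ) + j) / 11) atImInfty (comap Complex.im atTop) := by
      refine tendsto_comap_iff.2 ?_
      have : Tendsto (fun τ : ℍ => τ.im / 11) atImInfty atTop :=
        Tendsto.atTop_div_const (by norm_num) tendsto_comap
      refine this.congr fun τ => ?_
      have h11 : ((11 : ℂ)) = ((11 : ℝ) : ℂ) := by norm_num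
      simp only [Function.comp]
      rw [h11, Complex.div_ofReal_im]
      simp
    refine (tendsto_hrel.comp ht).congr fun τ => ?_
    rw [ModularForm.SL_slash_apply]
    have hτj : 0 < (((τ : ℂ) + j) / 11).im := by
      have h11 : ((11 : ℂ)) = ((11 : ℝ) : ℂ) := by norm_num
      rw [h11, Complex.div_ofReal_im]
      simpa using τ.im_pos
    have h0 : (τ : ℂ) + j ≠ 0 := by
      intro h; rw [h] at hτj; simp at hτj
    have h1 := hrel_gamma γ' hd _ (fricke_im hτj)
    rw [hrel_fricke _ hτj] at h1
    simp only [hrelH, Function.comp, neg_zero, zpow_zero, mul_one]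
    rw [coe_moebius, ← h1]
    congr 1
    change (((γ 0 0 * j - γ 0 1 : ℤ) : ℂ) * _ + (γ 0 0 : ℤ)) /
      (((γ 1 0 * j - γ 1 1 : ℤ) : ℂ) * _ + (γ 1 0 : ℤ)) = _
    have e : -1 / (11 * (((τ : ℂ) + j) / 11)) = -1 / ((τ : ℂ) + j) := by
      congr 1; ring
    rw [e]
    rw [← mul_div_mul_right _ _ h0]
    congr 1 <;> (push_cast; field_simp; ring)

/-- The relation as a modular form of weight zero. -/
def hrelForm : ModularForm ((CongruenceSubgroup.Gamma0 11).map (Matrix.SpecialLinearGroup.mapGL ℝ)) 0 where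
  toFun := hrelH
  slash_action_eq' A hA := by
    obtain ⟨γ, hγ, rfl⟩ := hA
    have h11 : (11 : ℤ) ∣ γ 1 0 := by
      have := CongruenceSubgroup.Gamma0_mem.1 hγ
      exact (ZMod.intCast_zmod_eq_zero_iff_dvd _ 11).1 this
    ext τ
    change (hrelH ∣[(0 : ℤ)] γ) τ = _
    rw [ModularForm.SL_slash_apply]
    simp only [hrelH, coe_moebius, hrel_gamma γ h11 τ τ.im_pos]
    simp
  holo' := by
    rw [UpperHalfPlane.mdifferentiable_iff]
    refine hrel_differentiableOn.congr fun z hz => ?_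
    simp [hrelH, ofComplex_apply_of_im_pos hz]
  bdd_at_cusps' hc := by
    rw [Subgroup.IsArithmetic.isCusp_iff_isCusp_SL2Z] at hc
    rw [OnePoint.isBoundedAt_iff_forall_SL2Z hc]
    intro γ _
    exact (hrelH_slash γ).isBoundedAtImInfty

lemma hrel_zero (τ : ℂ) (hτ : 0 < τ.im) : hrel τ = 0 := by
  obtain ⟨c, hc⟩ := ModularForm.eq_const_of_weight_zero hrelForm
  have h : ∀ z : ℍ, hrelH z = c := fun z => congrFun hc z
  have h0 := hrelH_zero
  have h2 : Tendsto hrelH atImInfty (𝓝 c) := tendsto_const_nhds.congr fun z => (h z).symm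
  have h3 : c = 0 := tendsto_nhds_unique h2 h0
  rw [← h3]
  exact h ⟨τ, hτ⟩

end

/-- The newform of weight two on `Γ₀(11)` satisfies an algebraic relation between
its differential invariants `I₂` and `J₂`. -/
theorem newform11_invariant_relation :
    ∀ τ : ℂ, 0 < τ.im →
      J2 f11 τ ^ 4 +
      32 * (I2 f11 τ - 8) * (I2 f11 τ ^ 2 + 72 * I2 f11 τ - 944) * J2 f11 τ ^ 2 +
      256 * (I2 f11 τ + 8) *
        (I2 f11 τ ^ 3 + 152 * I2 f11 τ ^ 2 - 704 * I2 f11 τ + 1168) *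
        (I2 f11 τ - 8) ^ 2 = 0 := by
  exact hrel_zero
end
end

section
/- The unique weight-two newform on Γ₀(14), f(τ) = q ∏_{n≥1}(1−qⁿ)(1−q²ⁿ)(1−q⁷ⁿ)(1−q¹⁴ⁿ), satisfies the algebraic relation between its differential invariants: for every τ ∈ ℍ, J₂⁴ + 32(I₂ − 5)(I₂² + 49I₂ − 350)J₂² + 256(I₂ + 20)(I₂ − 4)(I₂² + 86I₂ − 199)(I₂ − 5)² = 0, where I₂ = (2ff'' − 3(f')²)/f⁴ and J₂ = (4f²f''' − 24ff'f'' + 24(f')³)/f⁶. -/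
open Complex

noncomputable section

/-- The unique weight-two newform on `Γ₀(14)`,
`f(τ) = q ∏_{n≥1} (1−qⁿ)(1−q²ⁿ)(1−q⁷ⁿ)(1−q¹⁴ⁿ)`. -/
def f14 : ℂ → ℂ := fun τ =>
  qq τ * ∏' n : ℕ, ((1 - qq τ ^ (n + 1)) * (1 - qq τ ^ (2 * (n + 1))) *
    (1 - qq τ ^ (7 * (n + 1))) * (1 - qq τ ^ (14 * (n + 1))))

section
open UpperHalfPlane hiding I
open scoped Manifold MatrixGroups ModularForm Topology
namespace N14

open Derivative Filter Asymptotics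

/-- Cauchy estimate: exponential decay is preserved by differentiation. -/
lemma D_isBigO {F : ℍ → ℂ} (hF : MDiff F) {c : ℝ} (hc : 0 ≤ c)
    (h : F =O[atImInfty] fun τ => Real.exp (-c * τ.im)) :
    D F =O[atImInfty] fun τ => Real.exp (-c * τ.im) := by
  obtain ⟨C, hC⟩ := h.bound
  obtain ⟨A, hA⟩ := (atImInfty_mem _).mp hC
  rw [UpperHalfPlane.mdifferentiable_iff] at hF
  refine IsBigO.of_bound (‖(2 * Real.pi * I : ℂ)⁻¹‖ * (|C| * Real.exp (c / 2) / (1 / 2))) ?_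
  refine (atImInfty_mem _).mpr ⟨|A| + 1, fun τ hτ => ?_⟩
  have hsub : Metric.closedBall (τ : ℂ) (1 / 2) ⊆ {z : ℂ | |A| + 1 / 2 ≤ z.im ∧ τ.im - 1 / 2 ≤ z.im} := by
    intro z hz
    rw [Metric.mem_closedBall, dist_eq_norm] at hz
    have h1 := (abs_le.mp ((Complex.abs_im_le_norm _).trans hz)).1
    simp only [Complex.sub_im, UpperHalfPlane.coe_im] at h1
    constructor <;> linarith
  have hpos : ∀ z ∈ Metric.closedBall (τ : ℂ) (1 / 2), 0 < z.im := fun z hz => by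
    have := (hsub hz).1
    have := abs_nonneg A
    linarith
  have hd : DiffContOnCl ℂ (F ∘ ofComplex) (Metric.ball (τ : ℂ) (1 / 2)) := by
    apply DifferentiableOn.diffContOnCl
    exact hF.mono fun z hz => hpos z (Metric.closure_ball_subset_closedBall hz)
  have key := Complex.norm_deriv_le_of_forall_mem_sphere_norm_le (C := |C| * Real.exp (c / 2) * Real.exp (-c * τ.im))
    (by norm_num : (0 : ℝ) < 1 / 2) hd (fun z hz => by
      have hz' := Metric.sphere_subset_closedBall hz
      have hzp := hpos z hz'
      have h1 := hA ⟨z, hzp⟩ (by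
        have := (hsub hz').1
        have := le_abs_self A
        change A ≤ z.im
        linarith)
      simp only [Function.comp_apply, ofComplex_apply_of_im_pos hzp]
      refine h1.trans ?_
      rw [Real.norm_eq_abs, abs_of_pos (Real.exp_pos _), mul_assoc, ← Real.exp_add]
      refine mul_le_mul (le_abs_self C) (Real.exp_le_exp.mpr ?_) (Real.exp_pos _).le (abs_nonneg _)
      have := (hsub hz').2
      change -c * z.im ≤ _
      nlinarith)
  simp only [normalizedDerivOfComplex, norm_mul]
  rw [mul_assoc]
  refine (mul_le_mul_of_nonneg_left key (norm_nonneg _)).trans ?_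
  rw [Real.norm_eq_abs (Real.exp _), abs_of_pos (Real.exp_pos _)]
  apply le_of_eq
  ring

lemma D_bdd {F : ℍ → ℂ} (hF : MDiff F) (h : IsBoundedAtImInfty F) : IsBoundedAtImInfty (D F) := by
  have := D_isBigO hF (le_refl 0) (by simpa [IsBoundedAtImInfty, BoundedAtFilter, Pi.one_def] using h)
  simpa [IsBoundedAtImInfty, BoundedAtFilter, Pi.one_def] using this

/-- Holomorphic modular forms on `Γ₀(14)`. -/
structure IsMF (k : ℤ) (F : ℍ → ℂ) : Prop where
  holo : MDiff F
  inv : ∀ γ ∈ CongruenceSubgroup.Gamma0 14, F ∣[k] γ = F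
  bdd : ∀ γ : SL(2, ℤ), IsBoundedAtImInfty (F ∣[k] γ)

lemma mdiff_slash {F : ℍ → ℂ} (hF : MDiff F) (k : ℤ) (γ : SL(2, ℤ)) : MDiff (F ∣[k] γ) := by
  rw [ModularForm.SL_slash]
  exact hF.slash k _

namespace IsMF
variable {k l : ℤ} {F G : ℍ → ℂ}

lemma add (hF : IsMF k F) (hG : IsMF k G) : IsMF k (F + G) where
  holo := hF.holo.add hG.holo
  inv γ h := by rw [SlashAction.add_slash, hF.inv γ h, hG.inv γ h]
  bdd γ := by rw [SlashAction.add_slash]; exact (hF.bdd γ).add (hG.bdd γ)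

lemma smul (c : ℂ) (hF : IsMF k F) : IsMF k (c • F) where
  holo := hF.holo.const_smul c
  inv γ h := by rw [ModularForm.SL_smul_slash, hF.inv γ h]
  bdd γ := by rw [ModularForm.SL_smul_slash]; exact (hF.bdd γ).const_smul_left c

lemma mul (hF : IsMF k F) (hG : IsMF l G) : IsMF (k + l) (F * G) where
  holo := hF.holo.mul hG.holo
  inv γ h := by rw [ModularForm.mul_slash_SL2, hF.inv γ h, hG.inv γ h]
  bdd γ := by rw [ModularForm.mul_slash_SL2]; exact (hF.bdd γ).mul (hG.bdd γ)

lemma serre (hF : IsMF k F) : IsMF (k + 2) (serreDerivative k F) where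
  holo := serreDerivative_mdifferentiable _ hF.holo
  inv γ h := by rw [serreDerivative_slash_equivariant hF.holo, hF.inv γ h]
  bdd γ := by
    rw [serreDerivative_slash_equivariant hF.holo]
    have h1 := D_bdd (mdiff_slash hF.holo k γ) (hF.bdd γ)
    have h2 := (EisensteinSeries.isBoundedAtImInfty_E2.mul (hF.bdd γ)).const_smul_left ((k : ℂ) * 12⁻¹)
    have h3 : serreDerivative k (F ∣[k] γ) = D (F ∣[k] γ) - ((k : ℂ) * 12⁻¹) • (EisensteinSeries.E2 * (F ∣[k] γ)) := by
      ext z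
      simp [mul_assoc]
    rw [h3]
    exact h1.sub h2

end IsMF
end N14
end

section
open UpperHalfPlane hiding I
open scoped Manifold MatrixGroups ModularForm Topology
namespace N14
open Derivative Filter Asymptotics

/-- The cocycle `(2πi)⁻¹ c/(cz+d)`. -/
def vv (γ : SL(2, ℤ)) (z : ℍ) : ℂ := (2 * Real.pi * I)⁻¹ * ((γ 1 0 : ℤ) / denom γ z)

lemma E2_slash (γ : SL(2, ℤ)) :
    EisensteinSeries.E2 ∣[(2 : ℤ)] γ = EisensteinSeries.E2 + (12 : ℂ) • vv γ := by
  rw [EisensteinSeries.E2_slash_action]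
  ext z
  simp only [Pi.sub_apply, Pi.add_apply, Pi.smul_apply, smul_eq_mul, EisensteinSeries.D2, vv,
    riemannZeta_two]
  have : (Real.pi : ℂ) ≠ 0 := by exact_mod_cast Real.pi_ne_zero
  have := denom_ne_zero γ z
  have := I_ne_zero
  rw [sub_eq_add_neg]
  congr 1
  field_simp
  rw [I_sq]
  ring

lemma E2_md : MDiff EisensteinSeries.E2 := _root_.E2_mdifferentiable

lemma vv_md (γ : SL(2, ℤ)) : MDiff (vv γ) := by
  have h : vv γ = (12 : ℂ)⁻¹ • (EisensteinSeries.E2 ∣[(2 : ℤ)] γ - EisensteinSeries.E2) := by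
    rw [E2_slash]; ext z; simp
  rw [h]
  exact ((mdiff_slash E2_md 2 γ).sub E2_md).const_smul _

lemma D_vv (γ : SL(2, ℤ)) : D (vv γ) = - vv γ ^ 2 := by
  ext z
  have hd : HasDerivAt (fun w : ℂ => (2 * Real.pi * I)⁻¹ * ((γ 1 0 : ℤ) / ((γ 1 0 : ℤ) * w + (γ 1 1 : ℤ)) : ℂ))
      ((2 * Real.pi * I)⁻¹ * (- ((γ 1 0 : ℤ) * (γ 1 0 : ℤ)) / ((γ 1 0 : ℤ) * (z : ℂ) + (γ 1 1 : ℤ)) ^ 2)) z := by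
    have hne : ((γ 1 0 : ℤ) * (z : ℂ) + (γ 1 1 : ℤ)) ≠ 0 := by
      have := denom_ne_zero γ z
      rwa [ModularGroup.denom_apply] at this
    have h1 : HasDerivAt (fun w : ℂ => ((γ 1 0 : ℤ) * w + (γ 1 1 : ℤ) : ℂ)) (γ 1 0 : ℤ) z := by
      simpa using ((hasDerivAt_id (z : ℂ)).const_mul ((γ 1 0 : ℤ) : ℂ)).add_const ((γ 1 1 : ℤ) : ℂ)
    have h2 := ((hasDerivAt_const (z : ℂ) ((γ 1 0 : ℤ) : ℂ)).div h1 hne).const_mul (2 * Real.pi * I : ℂ)⁻¹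
    rw [zero_mul, zero_sub] at h2
    exact h2
  have he : (vv γ ∘ ofComplex) =ᶠ[𝓝 (z : ℂ)] (fun w : ℂ => (2 * Real.pi * I)⁻¹ * ((γ 1 0 : ℤ) / ((γ 1 0 : ℤ) * w + (γ 1 1 : ℤ)) : ℂ)) := by
    filter_upwards [isOpen_upperHalfPlaneSet.mem_nhds z.2] with w hw
    simp only [Function.comp_apply, ofComplex_apply_of_im_pos hw, vv]
    congr 2
  simp only [normalizedDerivOfComplex]
  rw [he.deriv_eq, hd.deriv]
  simp only [Pi.neg_apply, Pi.pow_apply, vv, ModularGroup.denom_apply]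
  rw [mul_pow, div_pow]
  ring

/-- `E₂' - E₂²/12` is a modular form. -/
lemma serreE2 : IsMF 4 (serreDerivative 1 EisensteinSeries.E2) := by
  have hinv : ∀ γ : SL(2, ℤ), serreDerivative 1 EisensteinSeries.E2 ∣[(4 : ℤ)] γ =
      serreDerivative 1 EisensteinSeries.E2 := by
    intro γ
    have h1 := normalizedDerivOfComplex_SL_slash (k := 2) E2_md (γ := γ)
    have e1 : serreDerivative 1 EisensteinSeries.E2 = D EisensteinSeries.E2 +
        (-(12 : ℂ)⁻¹) • (EisensteinSeries.E2 * EisensteinSeries.E2) := by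
      ext z; simp; ring
    have e2 : (EisensteinSeries.E2 * EisensteinSeries.E2) ∣[(4 : ℤ)] γ = 
      (EisensteinSeries.E2 ∣[(2 : ℤ)] γ) * (EisensteinSeries.E2 ∣[(2 : ℤ)] γ) :=
        ModularForm.mul_slash_SL2 2 2 γ _ _
    have h3 : D EisensteinSeries.E2 ∣[(4 : ℤ)] γ = D (EisensteinSeries.E2 ∣[(2 : ℤ)] γ) + (2 : ℂ) •
        (vv γ * EisensteinSeries.E2 ∣[(2 : ℤ)] γ) := by
      rw [h1]; ext z; simp [vv]; ring
    rw [e1, SlashAction.add_slash, ModularForm.SL_smul_slash, e2, h3, E2_slash,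
      normalizedDerivOfComplex_add _ _ E2_md ((vv_md γ).const_smul _),
      normalizedDerivOfComplex_smul _ _ (vv_md γ), D_vv]
    ext z
    simp
    ring
  refine ⟨serreDerivative_mdifferentiable _ E2_md, fun γ _ => hinv γ, fun γ => ?_⟩
  rw [hinv]
  have e1 : serreDerivative 1 EisensteinSeries.E2 = D EisensteinSeries.E2 -
        ((12 : ℂ)⁻¹) • (EisensteinSeries.E2 * EisensteinSeries.E2) := by
      ext z; simp; ring
  rw [e1]
  exact (D_bdd E2_md EisensteinSeries.isBoundedAtImInfty_E2).sub
    ((EisensteinSeries.isBoundedAtImInfty_E2.mul EisensteinSeries.isBoundedAtImInfty_E2).const_smul_left _)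
end N14
end

section
open UpperHalfPlane hiding I
open scoped Manifold MatrixGroups ModularForm Topology
namespace N14
open Derivative Filter Asymptotics

/-- Composition with an affine map. -/
def At (r s : ℝ) (F : ℍ → ℂ) : ℍ → ℂ := fun τ => F (ofComplex (r * τ + s))

lemma aff_pos {r : ℝ} (hr : 0 < r) (s : ℝ) {z : ℂ} (hz : 0 < z.im) : 0 < ((r : ℂ) * z + s).im := by
  simp; positivity

lemma At_bdd {r : ℝ} (hr : 0 < r) (s : ℝ) {F : ℍ → ℂ} (h : IsBoundedAtImInfty F) :
    IsBoundedAtImInfty (At r s F) := by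
  rw [isBoundedAtImInfty_iff] at h ⊢
  obtain ⟨M, A, hA⟩ := h
  refine ⟨M, A / r, fun τ hτ => hA _ ?_⟩
  rw [ofComplex_apply_of_im_pos (aff_pos hr s τ.2)]
  change A ≤ ((r : ℂ) * τ + s).im
  rw [div_le_iff₀ hr] at hτ
  simp
  linarith

lemma At_md {r : ℝ} (hr : 0 < r) (s : ℝ) {F : ℍ → ℂ} (h : MDiff F) : MDiff (At r s F) := by
  rw [UpperHalfPlane.mdifferentiable_iff] at h ⊢
  have h2 : DifferentiableOn ℂ (fun z : ℂ => (F ∘ ofComplex) (r * z + s)) {z | 0 < z.im} :=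
    DifferentiableOn.comp (f := fun z : ℂ => (r : ℂ) * z + s) h (by fun_prop) (fun z hz => aff_pos hr s hz)
  refine h2.congr fun z hz => ?_
  simp [At, ofComplex_apply_of_im_pos hz]

/-- `d E₂(dτ) - E₂(τ)`. -/
def X (d : ℝ) : ℍ → ℂ := (d : ℂ) • At d 0 EisensteinSeries.E2 - EisensteinSeries.E2

lemma E2_smul (γ : SL(2, ℤ)) (τ : ℍ) : EisensteinSeries.E2 (γ • τ) =
    denom γ τ ^ 2 * (EisensteinSeries.E2 τ + 12 * vv γ τ) := by
  have h := congrFun (E2_slash γ) τ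
  rw [ModularForm.SL_slash_apply] at h
  simp only [Pi.add_apply, Pi.smul_apply, smul_eq_mul] at h
  rw [← h]
  have := denom_ne_zero γ τ
  rw [mul_comm, mul_assoc, ← zpow_natCast, ← zpow_add₀ this]
  simp

lemma X_slash (d g e : ℕ) (hg : 0 < g) (he : 0 < e) (hd : d = g * e) (n : ℤ) (γ δ : SL(2, ℤ))
    (h1 : (d : ℤ) * γ 0 0 = δ 0 0 * g) (h2 : γ 1 0 = δ 1 0 * g)
    (h3 : (d : ℤ) * γ 0 1 = δ 0 0 * n + δ 0 1 * e)
    (h4 : γ 1 1 = δ 1 0 * n + δ 1 1 * e) :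
    X d ∣[(2 : ℤ)] γ = ((g / e : ℝ) : ℂ) • At (g / e) (n / e) EisensteinSeries.E2 - EisensteinSeries.E2 := by
  ext τ
  have hgR : (0 : ℝ) < g := by exact_mod_cast hg
  have heR : (0 : ℝ) < e := by exact_mod_cast he
  have hgC : (g : ℂ) ≠ 0 := by exact_mod_cast hg.ne'
  have heC : (e : ℂ) ≠ 0 := by exact_mod_cast he.ne'
  have hdR : (0 : ℝ) < d := by rw [hd]; push_cast; positivity
  set w : ℍ := ofComplex (((g / e : ℝ) : ℂ) * τ + ((n / e : ℝ) : ℂ)) with hw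
  have hwc : (w : ℂ) = (g * τ + n) / e := by
    rw [hw, ofComplex_apply_of_im_pos (aff_pos (by positivity) _ τ.2)]
    change (((g / e : ℝ) : ℂ) * τ + ((n / e : ℝ) : ℂ)) = _
    push_cast
    field_simp
  have hden : denom γ τ = e * denom δ w := by
    rw [ModularGroup.denom_apply, ModularGroup.denom_apply, hwc, h2, h4]
    push_cast
    field_simp
    ring
  have hne := denom_ne_zero γ τ
  have hne' := denom_ne_zero δ w
  have hact : ofComplex (((d : ℝ) : ℂ) * ((γ • τ : ℍ) : ℂ) + ((0 : ℝ) : ℂ)) = δ • w := by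
    apply UpperHalfPlane.ext
    rw [ofComplex_apply_of_im_pos (aff_pos hdR _ (γ • τ).2)]
    change (((d : ℝ) : ℂ) * ((γ • τ : ℍ) : ℂ) + ((0 : ℝ) : ℂ)) = _
    rw [UpperHalfPlane.coe_specialLinearGroup_apply, UpperHalfPlane.coe_specialLinearGroup_apply]
    have hd1 := hden
    rw [ModularGroup.denom_apply, ModularGroup.denom_apply] at hd1
    rw [ModularGroup.denom_apply] at hne hne'
    simp only [eq_intCast, algebraMap_int_eq, Complex.ofReal_intCast]
    rw [hd1, hwc]
    rw [hwc] at hne'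
    have h1' : (d : ℂ) * (γ 0 0 : ℤ) = (δ 0 0 : ℤ) * g := by exact_mod_cast h1
    have h3' : (d : ℂ) * (γ 0 1 : ℤ) = (δ 0 0 : ℤ) * n + (δ 0 1 : ℤ) * e := by exact_mod_cast h3
    push_cast
    rw [add_zero, ← mul_div_assoc, div_eq_div_iff (mul_ne_zero heC hne') hne']
    have key : (d : ℂ) * ((γ 0 0 : ℤ) * τ + (γ 0 1 : ℤ)) = e * ((δ 0 0 : ℤ) * ((g * τ + n) / e) + (δ 0 1 : ℤ)) := by
      field_simp
      linear_combination (τ : ℂ) * h1' + h3'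
    rw [key]
    ring
  rw [ModularForm.SL_slash_apply]
  simp only [X, Pi.sub_apply, Pi.smul_apply, smul_eq_mul, At]
  rw [hact, E2_smul γ τ, E2_smul δ w, ← hw]
  have hvv : (d : ℂ) * vv δ w = e ^ 2 * vv γ τ := by
    rw [vv, vv, hden, h2, hd]
    push_cast
    field_simp
  have hz : denom γ τ ^ (-(2 : ℤ)) = (denom γ τ ^ 2)⁻¹ := by rw [zpow_neg]; rfl
  rw [hz, hden]
  have hdC : (d : ℂ) = g * e := by exact_mod_cast hd
  push_cast
  field_simp
  linear_combination 12 * hvv + (EisensteinSeries.E2 w) * hdC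

lemma exists_split (d : ℕ) (hd : 0 < d) (γ : SL(2, ℤ)) : ∃ (g e : ℕ) (n : ℤ) (δ : SL(2, ℤ)),
    0 < g ∧ 0 < e ∧ d = g * e ∧ (d : ℤ) * γ 0 0 = δ 0 0 * g ∧ γ 1 0 = δ 1 0 * g ∧
    (d : ℤ) * γ 0 1 = δ 0 0 * n + δ 0 1 * e ∧ γ 1 1 = δ 1 0 * n + δ 1 1 * e := by
  have hdet : γ 0 0 * γ 1 1 - γ 0 1 * γ 1 0 = 1 := by
    have := γ.det_coe
    rwa [Matrix.det_fin_two] at this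
  set a := γ 0 0
  set b := γ 0 1
  set c := γ 1 0
  set δ := γ 1 1
  have hg0 : 0 < Int.gcd d c := Int.gcd_pos_of_ne_zero_left _ (by exact_mod_cast hd.ne')
  obtain ⟨e, he⟩ : (Int.gcd d c) ∣ d := by
    have := Int.gcd_dvd_left (d : ℤ) c
    exact_mod_cast this
  obtain ⟨c', hc'⟩ := Int.gcd_dvd_right (d : ℤ) c
  have hco : IsCoprime (e : ℤ) c' := by
    have h := Int.gcd_eq_gcd_ab (d : ℤ) c
    refine ⟨Int.gcdA d c, Int.gcdB d c, ?_⟩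
    have hz : ((Int.gcd d c : ℕ) : ℤ) ≠ 0 := by exact_mod_cast hg0.ne'
    apply mul_left_cancel₀ hz
    have he' : (d : ℤ) = (Int.gcd d c : ℕ) * e := by exact_mod_cast he
    linear_combination -h - Int.gcdA d c * he' - Int.gcdB d c * hc'
  have hac : IsCoprime a c' := ⟨δ, - b * Int.gcd d c, by linear_combination hdet + b * hc'⟩
  obtain ⟨u, v, huv⟩ := IsCoprime.mul_left hco hac
  set g := Int.gcd d c
  have he' : (d : ℤ) = (g : ℤ) * e := by exact_mod_cast he
  have hepos : 0 < e := by
    rcases Nat.eq_zero_or_pos e with h | h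
    · simp [h] at he; omega
    · exact h
  refine ⟨g, e, u * (d * b) + v * δ, ⟨!![e * a, -v; c', u], ?_⟩, hg0, hepos, he, ?_, ?_, ?_, ?_⟩
  · rw [Matrix.det_fin_two]; simp; linear_combination huv
  · simp; linear_combination a * he'
  · simp; linear_combination hc'
  · simp; linear_combination (-(d : ℤ) * b) * huv - v * e * hdet - (v * b * e) * hc' + v * b * c' * he'
  · simp; linear_combination (-δ) * huv + u * e * hdet - u * b * c' * he' + u * b * e * hc'

lemma X_isMF (d : ℕ) (hd : 0 < d) (hd14 : d ∣ 14) : IsMF 2 (X d) where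
  holo := ((At_md (by exact_mod_cast hd) 0 E2_md).const_smul _).sub E2_md
  inv γ h := by
    rw [CongruenceSubgroup.Gamma0_mem] at h
    rw [ZMod.intCast_zmod_eq_zero_iff_dvd] at h
    obtain ⟨c', hc⟩ : (d : ℤ) ∣ γ 1 0 := dvd_trans (by exact_mod_cast hd14) h
    have hdet : γ 0 0 * γ 1 1 - γ 0 1 * γ 1 0 = 1 := by
      have := γ.det_coe
      rwa [Matrix.det_fin_two] at this
    rw [X_slash d d 1 hd one_pos (by simp) 0 γ ⟨!![γ 0 0, d * γ 0 1; c', γ 1 1], by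
      rw [Matrix.det_fin_two]; simp; linear_combination hdet + γ 0 1 * hc⟩ (by simp [mul_comm])
      (by simp [hc, mul_comm]) (by simp) (by simp)]
    simp [X]
  bdd γ := by
    obtain ⟨g, e, n, δ, h1, h2, h3, h4, h5, h6, h7⟩ := exists_split d hd γ
    rw [X_slash d g e h1 h2 h3 n γ δ h4 h5 h6 h7]
    exact ((At_bdd (by positivity) _ EisensteinSeries.isBoundedAtImInfty_E2).const_smul_left _).sub
      EisensteinSeries.isBoundedAtImInfty_E2
end N14
end

section
open UpperHalfPlane hiding I
open scoped Manifold MatrixGroups ModularForm Topology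
namespace N14
open Derivative Filter Asymptotics

/-- Invariant of a coset: a point of the projective line over `ZMod p`. -/
def pt (p : ℕ) [Fact p.Prime] (γ : SL(2, ℤ)) : Option (ZMod p) :=
  if ((γ 1 0 : ℤ) : ZMod p) = 0 then none else some (((γ 0 0 : ℤ) : ZMod p) / ((γ 1 0 : ℤ) : ZMod p))

lemma pt_eq {p : ℕ} [Fact p.Prime] {γ δ : SL(2, ℤ)} (h : pt p γ = pt p δ) :
    (p : ℤ) ∣ γ 0 0 * δ 1 0 - γ 1 0 * δ 0 0 := by
  rw [← ZMod.intCast_zmod_eq_zero_iff_dvd]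
  push_cast
  unfold pt at h
  split_ifs at h with h1 h2 h2
  · rw [h1, h2]; ring
  · have := Option.some.inj h
    rw [div_eq_div_iff h1 h2] at this
    linear_combination this

lemma index_le : (CongruenceSubgroup.Gamma0 14).index ≤ 24 := by
  have : Fact (Nat.Prime 7) := ⟨by norm_num⟩
  have hinj : Function.Injective (fun q : SL(2, ℤ) ⧸ CongruenceSubgroup.Gamma0 14 =>
      (pt 2 q.out, pt 7 q.out)) := by
    intro q q' h
    have h2 := pt_eq (congrArg Prod.fst h)
    have h7 := pt_eq (congrArg Prod.snd h)
    rw [← QuotientGroup.out_eq' q, ← QuotientGroup.out_eq' q', QuotientGroup.eq,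
      CongruenceSubgroup.Gamma0_mem, ZMod.intCast_zmod_eq_zero_iff_dvd]
    have e : ((Quotient.out q)⁻¹ * Quotient.out q' : SL(2, ℤ)) 1 0 =
      (Quotient.out q) 0 0 * (Quotient.out q') 1 0 - (Quotient.out q) 1 0 * (Quotient.out q') 0 0 := by
      simp [Matrix.SpecialLinearGroup.coe_inv, Matrix.adjugate_fin_two, Matrix.mul_apply, Fin.sum_univ_two]
      ring
    rw [e]
    push_cast at h2 h7 ⊢
    omega
  have := Nat.card_le_card_of_injective _ hinj
  rw [Subgroup.index]
  refine this.trans ?_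
  simp [Nat.card_eq_fintype_card, ZMod.card]

/-- The modular form attached to `IsMF`. -/
def toMF {k : ℤ} {F : ℍ → ℂ} (h : IsMF k F) : ModularForm (CongruenceSubgroup.Gamma0 14 : Subgroup (GL (Fin 2) ℝ)) k where
  toFun := F
  slash_action_eq' g hg := by
    obtain ⟨γ, hγ, rfl⟩ := hg
    exact h.inv γ hγ
  holo' := h.holo
  bdd_at_cusps' {c} hc := by
    have hc' : IsCusp c 𝒮ℒ := hc.mono (by
      rintro _ ⟨γ, -, rfl⟩; exact ⟨γ, rfl⟩)
    rw [OnePoint.isBoundedAt_iff_forall_SL2Z hc']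
    intro γ _
    exact h.bdd γ

lemma coeff_zero {F : ℍ → ℂ} (hper : Function.Periodic (F ∘ ofComplex) 1) (hhol : MDiff F)
    (hb : IsBoundedAtImInfty F) {m n : ℕ} (hmn : n < m)
    (h : F =O[atImInfty] fun τ => Real.exp (-(2 * Real.pi * m) * τ.im)) :
    (qExpansion 1 F).coeff n = 0 := by
  obtain ⟨C, hC⟩ := h.bound
  obtain ⟨A, hA⟩ := (atImInfty_mem _).mp hC
  have hle : ∀ t : ℝ, 0 < t → A ≤ t → ‖(qExpansion 1 F).coeff n‖ ≤ C * Real.exp (-(2 * Real.pi) * t) := by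
    intro t ht hAt
    have hC0 : 0 ≤ C := by
      have := (norm_nonneg _).trans (hA ⟨t * I, by simpa using ht⟩ (by change A ≤ (t * I : ℂ).im; simpa using hAt))
      exact nonneg_of_mul_nonneg_left this (by rw [Real.norm_eq_abs, abs_of_pos (Real.exp_pos _)]; exact Real.exp_pos _)
    rw [qExpansion_coeff_eq_intervalIntegral one_pos (by simpa using hper) hhol hb n ht]
    simp only [ofReal_one, one_div_one, one_mul]
    have := intervalIntegral.norm_integral_le_of_norm_le_const (a := (0:ℝ)) (b := 1)
      (f := fun u : ℝ => 1 / Function.Periodic.qParam 1 (u + t * I) ^ n * F ⟨u + t * I, by simpa using ht⟩)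
      (C := C * Real.exp (-(2 * Real.pi) * t)) (fun u _ => by
        rw [norm_mul, norm_div, norm_pow, Function.Periodic.norm_qParam, norm_one]
        have h1 := hA ⟨u + t * I, by simpa using ht⟩ (by change A ≤ (u + t * I : ℂ).im; simpa using hAt)
        have h2 : (⟨u + t * I, by simpa using ht⟩ : ℍ).im = t := by
          change (u + t * I : ℂ).im = t; simp
        simp only [Set.mem_ofPred_eq, h2] at h1
        have h3 : (u + t * I : ℂ).im = t := by simp
        have h4 : Real.exp (-2 * Real.pi * (u + t * I : ℂ).im / 1) = Real.exp (-2 * Real.pi * t / 1) := by rw [h3]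
        rw [h4, ← Real.exp_nat_mul, one_div, ← Real.exp_neg]
        refine (mul_le_mul_of_nonneg_left h1 (Real.exp_pos _).le).trans ?_
        rw [Real.norm_eq_abs, abs_of_pos (Real.exp_pos _), mul_left_comm, ← Real.exp_add]
        refine mul_le_mul_of_nonneg_left (Real.exp_le_exp.mpr ?_) hC0
        have : ((n : ℝ) + 1) ≤ m := by exact_mod_cast hmn
        have := mul_le_mul_of_nonneg_left this (show 0 ≤ 2 * Real.pi * t by positivity)
        rw [div_one]
        linarith)
    simpa using this
  have hlim : Tendsto (fun t : ℝ => C * Real.exp (-(2 * Real.pi) * t)) atTop (𝓝 0) := by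
    have : Tendsto (fun t : ℝ => -(2 * Real.pi) * t) atTop atBot :=
      tendsto_id.const_mul_atTop_of_neg (by have := Real.pi_pos; linarith)
    simpa using (Real.tendsto_exp_atBot.comp this).const_mul C
  have := ge_of_tendsto hlim ((eventually_gt_atTop 0).and (eventually_ge_atTop A) |>.mono fun t ht => hle t ht.1 ht.2)
  exact norm_le_zero_iff.mp this

/-- Sturm bound for `Γ₀(14)`. -/
lemma sturm {k m : ℕ} {F : ℍ → ℂ} (h : IsMF k F) (hm : 2 * k < m)
    (hF : F =O[atImInfty] fun τ => Real.exp (-(2 * Real.pi * m) * τ.im)) : F = 0 := by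
  let f := toMF h
  suffices hN : ModularForm.norm 𝒮ℒ f = 0 from (ModularForm.norm_eq_zero_iff 𝒮ℒ f).mp hN
  have hbig : (ModularForm.norm 𝒮ℒ f : ℍ → ℂ) =O[atImInfty] fun τ => Real.exp (-(2 * Real.pi * m) * τ.im) := by
    rw [ModularForm.coe_norm]
    classical
    let _ := Fintype.ofFinite (𝒮ℒ ⧸ (((CongruenceSubgroup.Gamma0 14 : Subgroup SL(2, ℤ)) : Subgroup (GL (Fin 2) ℝ)).subgroupOf 𝒮ℒ))
    have := IsBigO.finsetProd (s := Finset.univ) (l := atImInfty) (f := fun q τ => SlashInvariantForm.quotientFunc (ℋ := 𝒮ℒ) f q τ)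
      (g := fun q (τ : ℍ) => if q = ⟦1⟧ then Real.exp (-(2 * Real.pi * m) * τ.im) else 1) (by
        intro q _
        split_ifs with hq
        · rw [hq, SlashInvariantForm.quotientFunc_mk]
          have hF' : (f : ℍ → ℂ) =O[atImInfty] fun τ => Real.exp (-(2 * Real.pi * m) * τ.im) := hF
          have h1 : (f : ℍ → ℂ) ∣[(k : ℤ)] (((1 : 𝒮ℒ) : GL (Fin 2) ℝ))⁻¹ = f := by simp
          rw [h1]
          exact hF'
        · induction q using Quotient.inductionOn with
          | h r =>
            rw [SlashInvariantForm.quotientFunc_mk]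
            obtain ⟨_, γ, rfl⟩ := r
            have : IsBoundedAtImInfty ((f : ℍ → ℂ) ∣[(k : ℤ)] ((Matrix.SpecialLinearGroup.mapGL ℝ γ)⁻¹)) := by
              rw [← map_inv]; exact h.bdd γ⁻¹
            simpa [IsBoundedAtImInfty, BoundedAtFilter, Pi.one_def] using this)
    rw [Finset.prod_fn]
    simpa [Finset.prod_ite_eq'] using this
  apply ModularForm.sturm_bound_levelOne
  have hcard : Nat.card (𝒮ℒ ⧸ (((CongruenceSubgroup.Gamma0 14 : Subgroup SL(2, ℤ)) : Subgroup (GL (Fin 2) ℝ)).subgroupOf 𝒮ℒ)) ≤ 24 := by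
    have h1 := Subgroup.relIndex_map_map_of_injective (f := (Matrix.SpecialLinearGroup.mapGL ℝ : SL(2, ℤ) →* _)) (CongruenceSubgroup.Gamma0 14) ⊤ Matrix.SpecialLinearGroup.mapGL_injective
    rw [Subgroup.relIndex_top_right, ← MonoidHom.range_eq_map] at h1
    exact h1.le.trans index_le
  have hmem : (1 : ℝ) ∈ (𝒮ℒ : Subgroup (GL (Fin 2) ℝ)).strictPeriods := by simp
  have hle : ((m : ℕ) : ℕ∞) ≤ (qExpansion 1 (ModularForm.norm 𝒮ℒ f)).order := by
    apply PowerSeries.nat_le_order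
    intro i hi
    exact coeff_zero (by simpa using SlashInvariantFormClass.periodic_comp_ofComplex (ModularForm.norm 𝒮ℒ f) hmem)
      (ModularFormClass.holo _) (ModularFormClass.bdd_at_infty _) hi hbig
  refine lt_of_lt_of_le ?_ hle
  norm_cast
  rw [Nat.div_lt_iff_lt_mul (by norm_num)]
  nlinarith
end N14
end

section
open UpperHalfPlane hiding I
open scoped Manifold MatrixGroups ModularForm Topology
namespace N14
open Derivative Filter Asymptotics

/-- The nome. -/
def qh (τ : ℍ) : ℂ := cexp (2 * Real.pi * I * τ)

lemma norm_qh (τ : ℍ) : ‖qh τ‖ = Real.exp (-(2 * Real.pi) * τ.im) := by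
  rw [qh, Complex.norm_exp]
  congr 1
  simp

lemma norm_qh_pow (N : ℕ) (τ : ℍ) : ‖qh τ ^ N‖ = Real.exp (-(2 * Real.pi * N) * τ.im) := by
  rw [norm_pow, norm_qh, ← Real.exp_nat_mul]
  congr 1
  ring

lemma qh_md : MDiff qh := by
  rw [UpperHalfPlane.mdifferentiable_iff]
  have : DifferentiableOn ℂ (fun z : ℂ => cexp (2 * Real.pi * I * z)) {z | 0 < z.im} := by fun_prop
  refine this.congr fun z hz => ?_
  simp [qh, ofComplex_apply_of_im_pos hz]

lemma D_qh : D qh = qh := by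
  ext z
  have he : (qh ∘ ofComplex) =ᶠ[𝓝 (z : ℂ)] (fun w : ℂ => cexp (2 * Real.pi * I * w)) := by
    filter_upwards [isOpen_upperHalfPlaneSet.mem_nhds z.2] with w hw
    simp [ofComplex_apply_of_im_pos hw, qh]
  have hd : HasDerivAt (fun w : ℂ => cexp (2 * Real.pi * I * w)) (cexp (2 * Real.pi * I * z) * (2 * Real.pi * I)) (z : ℂ) := by
    have := ((hasDerivAt_id (z : ℂ)).const_mul (2 * Real.pi * I : ℂ)).cexp
    simpa using this
  rw [normalizedDerivOfComplex, he.deriv_eq, hd.deriv, qh]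
  have : (Real.pi : ℂ) ≠ 0 := by exact_mod_cast Real.pi_ne_zero
  have := I_ne_zero
  field_simp

/-- Evaluation of a list of coefficients. -/
def ev : List ℤ → ℂ → ℂ
  | [], _ => 0
  | a :: l, x => a + x * ev l x

/-- Sum of lists. -/
def addL : List ℤ → List ℤ → List ℤ
  | [], m => m
  | l, [] => l
  | a :: l, b :: m => (a + b) :: addL l m

/-- Product of lists. -/
def mulL : List ℤ → List ℤ → List ℤ
  | [], _ => []
  | a :: l, m => addL (m.map (a * ·)) (0 :: mulL l m)

/-- Euler derivative of lists. -/
def dL : ℕ → List ℤ → List ℤ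
  | _, [] => []
  | n, a :: l => (n * a) :: dL (n + 1) l

/-- Substitution `x ↦ x^(d+1)`. -/
def exL (d : ℕ) : List ℤ → List ℤ
  | [] => []
  | a :: l => (a :: List.replicate d 0) ++ exL d l

lemma ev_add (l m : List ℤ) (x : ℂ) : ev (addL l m) x = ev l x + ev m x := by
  induction l generalizing m with
  | nil => simp [addL, ev]
  | cons a l ih =>
    cases m with
    | nil => simp [addL, ev]
    | cons b m => simp [addL, ev, ih]; ring

lemma ev_map (c : ℤ) (l : List ℤ) (x : ℂ) : ev (l.map (c * ·)) x = c * ev l x := by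
  induction l with
  | nil => simp [ev]
  | cons a l ih => simp [ev, ih]; ring

lemma ev_mul (l m : List ℤ) (x : ℂ) : ev (mulL l m) x = ev l x * ev m x := by
  induction l with
  | nil => simp [mulL, ev]
  | cons a l ih => simp [mulL, ev, ih, ev_add, ev_map]; ring

lemma ev_append (l m : List ℤ) (x : ℂ) : ev (l ++ m) x = ev l x + x ^ l.length * ev m x := by
  induction l with
  | nil => simp [ev]
  | cons a l ih => simp [ev, ih]; ring

lemma ev_replicate (d : ℕ) (x : ℂ) : ev (List.replicate d 0) x = 0 := by
  induction d with
  | zero => simp [ev]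
  | succ d ih => simp [List.replicate_succ, ev, ih]

lemma ev_exL (d : ℕ) (l : List ℤ) (x : ℂ) : ev (exL d l) x = ev l (x ^ (d + 1)) := by
  induction l with
  | nil => simp [exL, ev]
  | cons a l ih => 
    rw [exL, ev_append, ih]
    simp [ev, ev_replicate]

lemma ev_dL_succ (n : ℕ) (l : List ℤ) (x : ℂ) : ev (dL (n + 1) l) x = ev (dL n l) x + ev l x := by
  induction l generalizing n with
  | nil => simp [dL, ev]
  | cons a l ih => simp [dL, ev, ih]; ring

lemma ev_md (l : List ℤ) : MDiff (fun τ => ev l (qh τ)) := by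
  induction l with
  | nil => simpa [ev] using mdifferentiable_const
  | cons a l ih =>
    have : (fun τ => ev (a :: l) (qh τ)) = (fun _ => (a : ℂ)) + qh * (fun τ => ev l (qh τ)) := by
      ext τ; simp [ev]
    rw [this]
    exact mdifferentiable_const.add (qh_md.mul ih)

lemma D_ev (l : List ℤ) : D (fun τ => ev l (qh τ)) = fun τ => ev (dL 0 l) (qh τ) := by
  induction l with
  | nil => simp only [ev, dL]; rw [normalizedDerivOfComplex_const]; rfl
  | cons a l ih =>
    have : (fun τ => ev (a :: l) (qh τ)) = (fun _ => (a : ℂ)) + qh * (fun τ => ev l (qh τ)) := by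
      ext τ; simp [ev]
    rw [this, normalizedDerivOfComplex_add _ _ mdifferentiable_const (qh_md.mul (ev_md l)),
      normalizedDerivOfComplex_mul _ _ qh_md (ev_md l), ih, D_qh, normalizedDerivOfComplex_const]
    ext τ
    simp [dL, ev, ev_dL_succ]
    ring

lemma ev_sum (l : List ℤ) (x : ℂ) : ev l x = ∑ i ∈ Finset.range l.length, ((l.getD i 0 : ℤ) : ℂ) * x ^ i := by
  induction l with
  | nil => simp [ev]
  | cons a l ih =>
    rw [List.length_cons, Finset.sum_range_succ', ev, ih, Finset.mul_sum]
    simp [pow_succ]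
    rw [add_comm]
    congr 1
    apply Finset.sum_congr rfl
    intros; ring

/-- The comparison scale. -/
def sc (N : ℕ) (τ : ℍ) : ℝ := Real.exp (-(2 * Real.pi * N) * τ.im)

lemma qpow_isBigO (N : ℕ) : (fun τ => qh τ ^ N) =O[atImInfty] sc N :=
  IsBigO.of_bound 1 (Eventually.of_forall fun τ => by
    rw [norm_qh_pow, one_mul, sc, Real.norm_eq_abs, abs_of_pos (Real.exp_pos _)])

lemma sc_le {N N' : ℕ} (h : N ≤ N') : sc N' =O[atImInfty] sc N :=
  IsBigO.of_bound 1 (Eventually.of_forall fun τ => by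
    rw [one_mul, sc, sc, Real.norm_eq_abs, abs_of_pos (Real.exp_pos _), Real.norm_eq_abs, abs_of_pos (Real.exp_pos _)]
    apply Real.exp_le_exp.mpr
    have : (N : ℝ) ≤ N' := by exact_mod_cast h
    have := mul_le_mul_of_nonneg_left this (show 0 ≤ 2 * Real.pi * τ.im by have := τ.im_pos; positivity)
    linarith)

lemma sc_zero : sc 0 = fun _ => (1 : ℝ) := by ext; simp [sc]

lemma qh_isBigO : qh =O[atImInfty] (fun _ => (1 : ℝ)) := by
  have h1 := (qpow_isBigO 1).trans (sc_le (Nat.zero_le 1))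
  rw [sc_zero] at h1
  exact h1.congr_left fun τ => by simp

lemma ev_isBigO (l : List ℤ) : (fun τ => ev l (qh τ)) =O[atImInfty] (fun _ => (1 : ℝ)) := by
  induction l with
  | nil => exact (isBigO_zero (fun _ => (1 : ℝ)) _).congr_left fun τ => by simp [ev]
  | cons a l ih =>
    simp only [ev]
    refine (isBigO_const_const _ one_ne_zero _).add ?_
    simpa using qh_isBigO.mul ih

/-- `F` agrees with the polynomial with coefficients `l` up to `O(q^N)`. -/
def QA (N : ℕ) (F : ℍ → ℂ) (l : List ℤ) : Prop :=
  (fun τ => F τ - ev l (qh τ)) =O[atImInfty] sc N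

namespace QA
variable {N : ℕ} {F G : ℍ → ℂ} {l m : List ℤ}

lemma bdd (h : QA N F l) : F =O[atImInfty] (fun _ => (1 : ℝ)) := by
  have h1 : sc N =O[atImInfty] (fun _ => (1 : ℝ)) := by
    have := sc_le (Nat.zero_le N)
    rwa [sc_zero] at this
  have := (IsBigO.trans h h1).add (ev_isBigO l)
  simpa using this

lemma add (h : QA N F l) (h' : QA N G m) : QA N (F + G) (addL l m) := by
  refine (IsBigO.add h h').congr_left fun τ => ?_
  simp [ev_add]; ring

lemma smul (c : ℤ) (h : QA N F l) : QA N ((c : ℂ) • F) (l.map (c * ·)) := by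
  refine (IsBigO.const_mul_left h (c : ℂ)).congr_left fun τ => ?_
  simp [ev_map]; ring

lemma mul (h : QA N F l) (h' : QA N G m) : QA N (F * G) (mulL l m) := by
  have h1 : (fun τ => (F τ - ev l (qh τ)) * G τ) =O[atImInfty] sc N := by
    simpa using IsBigO.mul h h'.bdd
  have h2 : (fun τ => ev l (qh τ) * (G τ - ev m (qh τ))) =O[atImInfty] sc N := by
    simpa using (ev_isBigO l).mul h'
  refine (h1.add h2).congr_left fun τ => ?_
  simp [ev_mul]; ring

lemma deriv (hF : MDiff F) (h : QA N F l) : QA N (D F) (dL 0 l) := by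
  have := D_isBigO (F := F - fun τ => ev l (qh τ)) (hF.sub (ev_md l)) (c := 2 * Real.pi * N) (by positivity) h
  rw [normalizedDerivOfComplex_sub _ _ hF (ev_md l), D_ev] at this
  exact this

/-- Truncation. -/
lemma trunc (h : QA N F l) (hm : l.take N = m) : QA N F m := by
  subst hm
  have h1 : (fun τ => ev l (qh τ) - ev (l.take N) (qh τ)) =O[atImInfty] sc N := by
    rcases le_or_gt N l.length with hN | hN
    · have : ∀ τ, ev l (qh τ) - ev (l.take N) (qh τ) = qh τ ^ N * ev (l.drop N) (qh τ) := by
        intro τ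
        conv_lhs => rw [← List.take_append_drop N l]
        rw [ev_append]
        simp [hN]
      simp only [this]
      simpa using (qpow_isBigO N).mul (ev_isBigO (l.drop N))
    · rw [List.take_of_length_le hN.le]
      exact (isBigO_zero (sc N) _).congr_left fun τ => by simp
  refine (IsBigO.add h h1).congr_left fun τ => ?_
  ring

lemma div (c : ℤ) (hc : c ≠ 0) (h : QA N ((c : ℂ) • F) l) (hm : l = m.map (c * ·)) : QA N F m := by
  subst hm
  have hc' : (c : ℂ) ≠ 0 := by exact_mod_cast hc
  refine (IsBigO.const_mul_left h (c : ℂ)⁻¹).congr_left fun τ => ?_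
  simp [ev_map]
  field_simp

lemma at_ (d : ℕ) (h : QA N F l) : QA N (At (d + 1 : ℕ) 0 F) (exL d l) := by
  have ht : Tendsto (fun τ : ℍ => ofComplex (((d + 1 : ℕ) : ℝ) * τ + (0 : ℝ) : ℂ)) atImInfty atImInfty := by
    rw [atImInfty, tendsto_comap_iff]
    have : (UpperHalfPlane.im ∘ fun τ : ℍ => ofComplex (((d + 1 : ℕ) : ℝ) * τ + (0 : ℝ) : ℂ)) = fun τ : ℍ => ((d + 1 : ℕ) : ℝ) * τ.im := by
      ext τ
      rw [Function.comp_apply, ofComplex_apply_of_im_pos (aff_pos (by positivity) 0 τ.2)]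
      change ((((d + 1 : ℕ) : ℝ) * τ + (0 : ℝ) : ℂ)).im = _
      simp
    rw [this]
    exact tendsto_comap.const_mul_atTop (by positivity)
  have h1 := IsBigO.comp_tendsto h ht
  have h2 : (sc N ∘ fun τ : ℍ => ofComplex (((d + 1 : ℕ) : ℝ) * τ + (0 : ℝ) : ℂ)) = sc ((d + 1) * N) := by
    ext τ
    rw [Function.comp_apply, sc, sc, ofComplex_apply_of_im_pos (aff_pos (by positivity) 0 τ.2)]
    change Real.exp (_ * ((((d + 1 : ℕ) : ℝ) * τ + (0 : ℝ) : ℂ)).im) = _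
    congr 1
    simp
    ring
  rw [h2] at h1
  refine (h1.trans (sc_le (by nlinarith))).congr_left fun τ => ?_
  simp only [Function.comp_apply, At, ev_exL]
  congr 2
  rw [qh, qh, ofComplex_apply_of_im_pos (aff_pos (by positivity) 0 τ.2), ← Complex.exp_nat_mul]
  change cexp (_ * ((((d + 1 : ℕ) : ℝ) * τ + (0 : ℝ) : ℂ))) = _
  congr 1
  push_cast
  ring

lemma zero (h : QA N F l) (hl : l = List.replicate N 0) : F =O[atImInfty] sc N := by
  subst hl
  refine IsBigO.congr_left h fun τ => ?_
  simp [ev_replicate]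

end QA

lemma hasSum_isBigO (N : ℕ) {F : ℍ → ℂ} {c : ℕ → ℂ} (h : ∀ τ, HasSum (fun m => c m * qh τ ^ m) (F τ)) :
    (fun τ => F τ - ∑ m ∈ Finset.range N, c m * qh τ ^ m) =O[atImInfty] sc N := by
  have h0 := (h UpperHalfPlane.I).summable.norm
  have hq0 : 0 < ‖qh UpperHalfPlane.I‖ := by rw [norm_qh]; exact Real.exp_pos _
  have hs : Summable fun m => ‖c (m + N)‖ * ‖qh UpperHalfPlane.I‖ ^ m := by
    have := ((summable_nat_add_iff N).mpr h0).mul_right (‖qh UpperHalfPlane.I‖ ^ N)⁻¹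
    refine this.congr fun m => ?_
    rw [norm_mul, norm_pow, pow_add]
    field_simp
  refine IsBigO.of_bound (∑' m, ‖c (m + N)‖ * ‖qh UpperHalfPlane.I‖ ^ m) ?_
  refine (atImInfty_mem _).mpr ⟨1, fun τ hτ => ?_⟩
  have h1 := (hasSum_nat_add_iff' N).mpr (h τ)
  have hle : ‖qh τ‖ ≤ ‖qh UpperHalfPlane.I‖ := by
    rw [norm_qh, norm_qh]
    apply Real.exp_le_exp.mpr
    have := Real.pi_pos
    simp
    nlinarith
  have h2 := h1.norm_le_of_bounded (hs.hasSum.mul_left (‖qh τ‖ ^ N)) (fun m => by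
    rw [norm_mul, norm_pow, pow_add]
    have := mul_le_mul_of_nonneg_left (pow_le_pow_left₀ (norm_nonneg _) hle m) (norm_nonneg (c (m + N)))
    have := mul_le_mul_of_nonneg_left this (pow_nonneg (norm_nonneg (qh τ)) N)
    calc _ = ‖qh τ‖ ^ N * (‖c (m + N)‖ * ‖qh τ‖ ^ m) := by ring
      _ ≤ _ := this)
  refine h2.trans (le_of_eq ?_)
  rw [← norm_pow, norm_qh_pow, sc, Real.norm_eq_abs, abs_of_pos (Real.exp_pos _), mul_comm]

end N14
end

section
open UpperHalfPlane hiding I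
open scoped Manifold MatrixGroups ModularForm Topology
namespace N14
open Derivative Filter Asymptotics

/-- Coefficient list. -/
def e2L : List ℤ := [1, -24, -72, -96, -168, -144, -288, -192, -360, -312, -432, -288, -672,
  -336, -576, -576, -744, -432, -936, -480, -1008, -768, -864, -576, -1440, -744, -1008, -960,
  -1344, -720, -1728, -768, -1512, -1152, -1296, -1152, -2184, -912, -1440, -1344, -2160, -1008,
  -2304, -1056, -2016, -1872, -1728, -1152, -2976]

/-- Coefficient list. -/
def a2L : List ℤ := [1, 0, -24, 0, -72, 0, -96, 0, -168, 0, -144, 0, -288, 0, -192, 0, -360, 0,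
  -312, 0, -432, 0, -288, 0, -672, 0, -336, 0, -576, 0, -576, 0, -744, 0, -432, 0, -936, 0, -480,
  0, -1008, 0, -768, 0, -864, 0, -576, 0, -1440]

/-- Coefficient list. -/
def a7L : List ℤ := [1, 0, 0, 0, 0, 0, 0, -24, 0, 0, 0, 0, 0, 0, -72, 0, 0, 0, 0, 0, 0, -96, 0,
  0, 0, 0, 0, 0, -168, 0, 0, 0, 0, 0, 0, -144, 0, 0, 0, 0, 0, 0, -288, 0, 0, 0, 0, 0, 0]

/-- Coefficient list. -/
def a14L : List ℤ := [1, 0, 0, 0, 0, 0, 0, 0, 0, 0, 0, 0, 0, 0, -24, 0, 0, 0, 0, 0, 0, 0, 0, 0,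
  0, 0, 0, 0, -72, 0, 0, 0, 0, 0, 0, 0, 0, 0, 0, 0, 0, 0, -96, 0, 0, 0, 0, 0, 0]

/-- Coefficient list. -/
def phiL : List ℤ := [1, -1, -5, -4, -13, -6, -20, -15, -29, -13, -30, -12, -52, -14, -75, -24,
  -61, -18, -65, -20, -78, -60, -60, -24, -116, -31, -70, -40, -195, -30, -120, -32, -125, -48,
  -90, -90, -169, -38, -100, -56, -174, -42, -300, -44, -156, -78, -120, -48, -244]

/-- Coefficient list. -/
def x2L : List ℤ := [1, 24, 24, 96, 24, 144, 96, 192, 24, 312, 144, 288, 96, 336, 192, 576, 24,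
  432, 312, 480, 144, 768, 288, 576, 96, 744, 336, 960, 192, 720, 576, 768, 24, 1152, 432, 1152,
  312, 912, 480, 1344, 144, 1008, 768, 1056, 288, 1872, 576, 1152, 96]

/-- Coefficient list. -/
def x7L : List ℤ := [6, 24, 72, 96, 168, 144, 288, 24, 360, 312, 432, 288, 672, 336, 72, 576,
  744, 432, 936, 480, 1008, 96, 864, 576, 1440, 744, 1008, 960, 168, 720, 1728, 768, 1512, 1152,
  1296, 144, 2184, 912, 1440, 1344, 2160, 1008, 288, 1056, 2016, 1872, 1728, 1152, 2976]

/-- Coefficient list. -/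
def x14L : List ℤ := [13, 24, 72, 96, 168, 144, 288, 192, 360, 312, 432, 288, 672, 336, 240, 576,
  744, 432, 936, 480, 1008, 768, 864, 576, 1440, 744, 1008, 960, 336, 720, 1728, 768, 1512, 1152,
  1296, 1152, 2184, 912, 1440, 1344, 2160, 1008, 960, 1056, 2016, 1872, 1728, 1152, 2976]

/-- Coefficient list. -/
def mL : List ℤ := [-1, 0, -11, -26, -111, -114, -358, -384, -853, -732, -1532, -1292, -2906,
  -2086, -4915, -3440, -6667, -4660, -9515, -6638, -13320, -10570, -16624, -11680, -23574,
  -15012, -27384, -19532, -41079, -23436, -44032, -28572, -53933, -35856, -61258, -47586, -78999,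
  -48892, -85882, -59080, -106192, -65996, -137270, -76356, -139352, -91962, -151696, -99444,
  -188826]

/-- Coefficient list. -/
def kL : List ℤ := [4, -4, -20, -112, -820, -1848, -6608, -11004, -28148, -38452, -83832,
  -105648, -210448, -241304, -458220, -499296, -876148, -918792, -1583300, -1612016, -2691192,
  -2727312, -4298160, -4197216, -6709136, -6361084, -9913624, -9395680, -14755020, -13367544,
  -20358240, -18616640, -28221812, -25577664, -37918440, -34920648, -51004900, -45119384,
  -66106768, -58999136, -86029944, -75381096, -111721008, -95762864, -138525360, -120701784,
  -171823200, -149372160, -215038096]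

/-- Coefficient list. -/
def pL : List ℤ := [0, 0, 1, -2, -3, 6, 2, 0, -1, -12, 4, 4, -2, 2, -7, 16, 17, -4, 1, -38, -24,
  14, -16, 32, 18, 12, 24, 4, 21, -60, -64, -12, 7, 48, 62, -42, 21, 20, -34, -40, -64, 4, -14,
  108, 40, 30, -16, 60, -66]

/-- Coefficient list. -/
def k2L : List ℤ := [16, -32, -144, -736, -5264, -3744, 7264, 222432, 1213520, 4868640, 17480000,
  50138432, 141627296, 335282592, 803042800, 1667232512, 3551461040, 6701738752, 13089257072,
  22960394848, 41909181312, 69329223712, 119815567360, 188905463296, 312103398240, 472904074336,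
  752633838848, 1102782168512, 1699891921392, 2420349966336, 3629041629184, 5039904949184,
  7377883586256, 10025192456448, 14368754625568, 19151927364192, 26941654077936, 35290361664000,
  48828549918624, 62976478151296, 85844881133824, 109169360837504, 146836085472608,
  184351896152768, 244935451059584, 303976797065952, 399402876884224, 490442794516800,
  637884410901408]

/-- Coefficient list. -/
def mmL : List ℤ := [1, 0, 22, 52, 343, 800, 3834, 9048, 27831, 53836, 134270, 229916, 482662,
  744192, 1406150, 2019220, 3556341, 4816680, 8133690, 10519164, 17060020, 21226100, 33273908,
  40013220, 61129322, 71670060, 107205202, 123035104, 180277103, 202910528, 291271680, 323164296,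
  457721531, 501296392, 699343344, 758698480, 1044641527, 1115780664, 1524079774, 1614272140,
  2183745160, 2289760888, 3080276490, 3195243732, 4255822096, 4393694800, 5803395408, 5954394528,
  7828102022]

/-- Coefficient list. -/
def mpL : List ℤ := [0, 0, -1, 2, -8, -10, -28, 120, 26, -32, 90, -96, -148, -622, -617, 740,
  962, 644, 2659, -2618, -1460, 754, -2684, 2468, 1268, -360, -11726, 4676, 10424, -7900, -4000,
  8028, 12918, 1432, 1262, -21770, 256, 21740, -10476, -9180, 14760, -18436, -1916, -19968,
  -23320, -1250, -15616, 36540, 9836]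

/-- Coefficient list. -/
def ppL : List ℤ := [0, 0, 0, 0, 1, -4, -2, 24, -11, -44, 22, 4, 66, 52, -192, -12, 55, 64, 164,
  -352, 4, 288, 84, 484, -850, -732, 466, -312, 1193, 296, -704, 1104, -599, 808, -836, -3668,
  -143, -1088, 3674, 5948, -1432, 1056, -1618, -2868, 576, -8228, -3920, -72, 6434]

/-- Coefficient list. -/
def uL : List ℤ := [-1, 0, -16, -16, -96, -144, -368, -384, -848, -672, -1552, -1312, -2896,
  -2096, -4880, -3520, -6752, -4640, -9520, -6448, -13200, -10640, -16544, -11840, -23664,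
  -15072, -27504, -19552, -41184, -23136, -43712, -28512, -53968, -36096, -61568, -47376, -79104,
  -48992, -85712, -58880, -105872, -66016, -137200, -76896, -139552, -92112, -151616, -99744,
  -188496]

/-- Coefficient list. -/
def vL : List ℤ := [-16, 32, -112, 992, 6544, 18592, 101280, 18720, -606800, -7083808, -38274880,
  -165703744, -643791520, -2135855520, -6776550384, -19064104960, -52050426032, -129243586816,
  -313587080304, -704501918560, -1555127228032, -3220749016352, -6585886701312, -12758727220480,
  -24503418899552, -44904044163424, -81845935622400, -143107434154432, -249546569402864,
  -419143527143936, -703684298276352, -1141548487484864, -1854508385872592, -2918464571895040,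
  -4606555103055904, -7057723157013088, -10859763229409776, -16246678844554752,
  -24437680426001824, -35788727115053440, -52746927704317952, -75778545980177280,
  -109651141752272736, -154814863433929664, -220311420936484992, -306172361928785632,
  -429131277074740480, -587814140082359616, -812497718665363616]

/-- Coefficient list. -/
def wL : List ℤ := [1, 0, -27, 150, -399, 1710, 3162, 6528, 32955, 67668, 130980, 223812, 452310,
  695514, 1443117, 2059680, 3584229, 4825836, 8206581, 10514082, 16987080, 21162246, 33112992,
  39964752, 61488954, 71908620, 106467528, 123373428, 180370329, 202419828, 291322080, 323171268,
  458564163, 501083760, 699697782, 758915550, 1044704121, 1117226724, 1522280550, 1611740520,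
  2184969600, 2288487924, 3080748906, 3195269100, 4254477816, 4396513350, 5804002224, 5956210188,
  7826332086]

/-- Coefficient list. -/
def t2L : List ℤ := [-16, 32, 320, -2272, 20752, -65120, 122208, -92256, -2139824, 13752224,
  -4155040, 227488640, 310838816, 269803104, -7264444608, -71905018816, -381017531024,
  -1888675161472, -7579828576896, -28952128885408, -98753907516352, -320699883447776,
  -967013554382016, -2785565059847872, -7597435450338080, -19890697073502880, -49889105384778720,
  -120711844639029952, -282068757785632880, -638764914596810240, -1405219020397068288,
  -3007765860371038784, -6281909502190055792, -12807445971325074304, -25566463600309129408,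
  -49955004119806669408, -95830338452311184368, -180346052534056523904, -333949793813772911584,
  -607798481892333757888, -1090432457372230706048, -1925939012907022084608,
  -3358231671741518300064, -5772775431690938081408, -9809527297423222149120,
  -16452721551523721723872, -27308830264010002271488, -44786591494773586414656,
  -72759655454373264904160]

/-- Coefficient list. -/
def yL : List ℤ := [1, 0, 6, 84, 135, 960, 3546, 9048, 29127, 56844, 133950, 228060, 475014,
  730080, 1411638, 2032020, 3567333, 4821864, 8163114, 10505436, 17036340, 21215124, 33224244,
  40013988, 61217610, 71722860, 106980306, 123134880, 180348447, 202760448, 291264000, 323204424,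
  457976139, 501254664, 699430416, 758643600, 1044657063, 1116215544, 1523618238, 1613649420,
  2184095880, 2289381432, 3080375274, 3195153684, 4255402896, 4394333040, 5803459152, 5954984928,
  7827744678]

/-- Coefficient list. -/
def zL : List ℤ := [1, 0, -64, 224, -544, 736, 1824, 14592, 32256, 59840, 137632, 220864, 456800,
  680352, 1391296, 2085248, 3628128, 4859328, 8329728, 10364064, 16933664, 21233632, 33026368,
  40129152, 61407520, 71784768, 106104032, 123499328, 180936160, 202172224, 291067776, 323635008,
  458951680, 501258752, 699618240, 757556192, 1044692000, 1117866816, 1522447712, 1612299008,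
  2185299488, 2287965248, 3080433696, 3194097216, 4253701952, 4395224672, 5802832512, 5957551296,
  7827667552]

/-- Coefficient list. -/
def uuL : List ℤ := [1, 0, 32, 32, 448, 800, 4064, 8448, 27296, 53056, 133920, 230976, 485792,
  751712, 1407520, 2011520, 3548096, 4811840, 8111200, 10536544, 17074720, 21225760, 33302848,
  40000640, 61095392, 71655360, 107334112, 122980544, 180202688, 202996928, 291294080, 323111616,
  457577376, 501302272, 699309824, 758824480, 1044635392, 1115536064, 1524276384, 1614512640,
  2183561760, 2289971648, 3080255200, 3195371712, 4256069696, 4393501600, 5803453568, 5954027328,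
  7828164512]

/-- Coefficient list. -/
def yzL : List ℤ := [1, 0, -58, 308, -793, -2336, 12282, -48840, 48807, 149804, 877246, 7812604,
  26589446, 127510944, 389311798, 1275464084, 3371816229, 8783619144, 20594167050, 46833226140,
  100678853876, 209120093812, 420445389844, 815233133892, 1549105410730, 2840081236812,
  5144025928466, 8998073314112, 15633475226911, 26278820835712, 44025359378592, 71459363620584,
  115940544194059, 182544735866600, 287874370426320, 441245941064432, 678578182856615,
  1015509408819192, 1526932762477214, 2236827685233356, 3295770336180968, 4735949884376888,
  6851749025426634, 9675688471560948, 13767095377597040, 19135484871689840, 26817418293384240,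
  36738035447055552, 50776673333464006]

/-- Coefficient list. -/
def t3L : List ℤ := [1, 0, -26, 340, -2201, 6464, -25158, -48936, 49799, -1886196, 2439710,
  -8518436, 59842054, 339782112, 1938262422, 10360177172, 42517403429, 181179794664,
  650452842890, 2334075229020, 7521261218420, 23667087035284, 69166769998132, 195681673943972,
  523791479992970, 1355448331371372, 3357555445943666, 8055769011948320, 18654283625208639,
  41969179617849856, 91693271496200512, 195254897867942088, 405638251386702219,
  823680895092897672, 1637532959743291536, 3189668532403088400, 6099747343473411399,
  11452060538186404344, 21155716136752940894, 38435133596681164940, 68831947900352624072,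
  121409712577835507000, 211415821556923083338, 363063125212469558292, 616322781655656702160,
  1032958801065693690480, 1713254747819894337296, 2808265144606861699936, 4559717409561308316518]

/-- Notation for the Eisenstein series. -/
abbrev E : ℍ → ℂ := EisensteinSeries.E2

/-- `(X₂+X₇+X₁₄)/24`. -/
def psi : ℍ → ℂ := (24 : ℂ)⁻¹ • (X (2 : ℕ) + X (7 : ℕ) + X (14 : ℕ))
/-- Logarithmic derivative of the newform. -/
def phi : ℍ → ℂ := (6 : ℂ)⁻¹ • E + psi
/-- `I₂ f²`. -/
def Mf : ℍ → ℂ := (2 : ℂ) • D phi - phi * phi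
/-- `J₂ f³`. -/
def Kf : ℍ → ℂ := (2 : ℂ) • (D Mf - (2 : ℂ) • (phi * Mf))
/-- The square of the newform. -/
def Pf : ℍ → ℂ := (1428 : ℂ)⁻¹ • ((5 : ℂ) • (X (2 : ℕ) * X (7 : ℕ)) + (-12 : ℂ) • (X (2 : ℕ) * X (14 : ℕ))
  + (7 : ℂ) • (X (7 : ℕ) * X (14 : ℕ)) + (420 : ℂ) • Mf)

lemma qaE : QA 49 E e2L := by
  have h := hasSum_isBigO 49 (F := E) (c := fun m => (if m = 0 then 1 else -24 * ArithmeticFunction.sigma 1 m : ℂ))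
    (fun τ => by simpa [qh] using EisensteinSeries.hasSum_qExpansion_E2 (z := τ))
  refine h.congr_left fun τ => ?_
  rw [ev_sum]
  congr 1
  have hl : e2L.length = 49 := by decide +kernel
  rw [hl]
  apply Finset.sum_congr rfl
  intro i hi
  congr 1
  have key : ∀ i < 49, e2L.getD i 0 = if i = 0 then 1 else -24 * ((∑ d ∈ Nat.divisors i, d : ℕ) : ℤ) := by
    decide +kernel
  rw [key i (Finset.mem_range.mp hi), ArithmeticFunction.sigma_one_apply]
  split_ifs <;> push_cast <;> rfl

lemma qa2 : QA 49 (At (2 : ℕ) 0 E) a2L := (qaE.at_ 1).trunc (by decide +kernel)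
lemma qa7 : QA 49 (At (7 : ℕ) 0 E) a7L := (qaE.at_ 6).trunc (by decide +kernel)
lemma qa14 : QA 49 (At (14 : ℕ) 0 E) a14L := (qaE.at_ 13).trunc (by decide +kernel)

lemma qax2 : QA 49 (X (2 : ℕ)) x2L := by
  have := ((qa2.smul 2).add (qaE.smul (-1))).trunc (m := x2L) (by decide +kernel)
  convert this using 1
  ext τ; simp [X]; ring
lemma qax7 : QA 49 (X (7 : ℕ)) x7L := by
  have := ((qa7.smul 7).add (qaE.smul (-1))).trunc (m := x7L) (by decide +kernel)
  convert this using 1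
  ext τ; simp [X]; ring
lemma qax14 : QA 49 (X (14 : ℕ)) x14L := by
  have := ((qa14.smul 14).add (qaE.smul (-1))).trunc (m := x14L) (by decide +kernel)
  convert this using 1
  ext τ; simp [X]; ring

lemma qaphi : QA 49 phi phiL := by
  have := (((qax2.add qax7).add qax14).add (qaE.smul 4)).trunc (m := phiL.map (24 * ·)) (by decide +kernel)
  refine QA.div 24 (by norm_num) ?_ rfl
  convert this using 1
  ext τ; simp [phi, psi]; ring

end N14
end

section
open UpperHalfPlane hiding I
open scoped Manifold MatrixGroups ModularForm Topology
namespace N14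
open Derivative Filter Asymptotics

lemma X2_mf : IsMF 2 (X (2 : ℕ)) := X_isMF 2 (by norm_num) (by norm_num)
lemma X7_mf : IsMF 2 (X (7 : ℕ)) := X_isMF 7 (by norm_num) (by norm_num)
lemma X14_mf : IsMF 2 (X (14 : ℕ)) := X_isMF 14 (by norm_num) (by norm_num)

lemma psi_mf : IsMF 2 psi := ((X2_mf.add X7_mf).add X14_mf).smul _

lemma phi_md : MDiff phi := (E2_md.const_smul _).add psi_mf.holo

lemma Mf_md : MDiff Mf :=
  ((normalizedDerivOfComplex_mdifferentiable phi_md).const_smul _).sub (phi_md.mul phi_md)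

lemma D_phi : D phi = (6 : ℂ)⁻¹ • D E + D psi := by
  rw [phi, normalizedDerivOfComplex_add _ _ (E2_md.const_smul _) psi_mf.holo,
    normalizedDerivOfComplex_smul _ _ E2_md]

lemma Mf_mf : IsMF 4 Mf := by
  have h := ((serreE2.smul (3 : ℂ)⁻¹).add (psi_mf.serre.smul 2)).add ((psi_mf.mul psi_mf).smul (-1))
  convert h using 1
  ext τ
  simp only [Mf, D_phi]
  simp [phi]
  ring

lemma Kf_mf : IsMF 6 Kf := by
  have h := (Mf_mf.serre.smul 2).add ((psi_mf.mul Mf_mf).smul (-4))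
  have h2 : IsMF 6 _ := h
  convert h2 using 1
  ext τ
  simp [Kf, phi]
  ring

lemma Pf_mf : IsMF 4 Pf :=
  (((((X2_mf.mul X7_mf).smul 5).add ((X2_mf.mul X14_mf).smul (-12))).add
    ((X7_mf.mul X14_mf).smul 7)).add (Mf_mf.smul 420)).smul _

/-- Defect of the logarithmic derivative of `Pf`. -/
def Sf : ℍ → ℂ := D Pf + (-2 : ℂ) • (phi * Pf)

lemma Sf_mf : IsMF 6 Sf := by
  have h := Pf_mf.serre.add ((psi_mf.mul Pf_mf).smul (-2))
  have h2 : IsMF 6 _ := h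
  convert h2 using 1
  ext τ
  simp [Sf, phi]
  ring

/-- `M - 5P`. -/
def Uf : ℍ → ℂ := Mf + (-5 : ℂ) • Pf
/-- `M²+49MP-350P²`. -/
def Wf : ℍ → ℂ := Mf * Mf + (49 : ℂ) • (Mf * Pf) + (-350 : ℂ) • (Pf * Pf)
/-- `M²+86MP-199P²`. -/
def Zf : ℍ → ℂ := Mf * Mf + (86 : ℂ) • (Mf * Pf) + (-199 : ℂ) • (Pf * Pf)
/-- `(M+20P)(M-4P)`. -/
def Yf : ℍ → ℂ := (Mf + (20 : ℂ) • Pf) * (Mf + (-4 : ℂ) • Pf)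
/-- The relation. -/
def Gf : ℍ → ℂ := (Kf * Kf) * (Kf * Kf) + (32 : ℂ) • ((Uf * (Kf * Kf)) * Wf)
  + (256 : ℂ) • ((Yf * Zf) * (Uf * Uf))

lemma Uf_mf : IsMF 4 Uf := Mf_mf.add (Pf_mf.smul _)
lemma Wf_mf : IsMF 8 Wf := ((Mf_mf.mul Mf_mf).add ((Mf_mf.mul Pf_mf).smul _)).add ((Pf_mf.mul Pf_mf).smul _)
lemma Zf_mf : IsMF 8 Zf := ((Mf_mf.mul Mf_mf).add ((Mf_mf.mul Pf_mf).smul _)).add ((Pf_mf.mul Pf_mf).smul _)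
lemma Yf_mf : IsMF 8 Yf := (Mf_mf.add (Pf_mf.smul _)).mul (Mf_mf.add (Pf_mf.smul _))
lemma Gf_mf : IsMF 24 Gf :=
  (((Kf_mf.mul Kf_mf).mul (Kf_mf.mul Kf_mf)).add (((Uf_mf.mul (Kf_mf.mul Kf_mf)).mul Wf_mf).smul _)).add
    (((Yf_mf.mul Zf_mf).mul (Uf_mf.mul Uf_mf)).smul _)

lemma qaM : QA 49 Mf mL := by
  have := (((qaphi.deriv phi_md).smul 2).add ((qaphi.mul qaphi).smul (-1))).trunc (m := mL) (by decide +kernel)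
  convert this using 1
  ext τ; simp [Mf]; ring
lemma qaK : QA 49 Kf kL := by
  have := (((qaM.deriv Mf_md).smul 2).add ((qaphi.mul qaM).smul (-4))).trunc (m := kL) (by decide +kernel)
  convert this using 1
  ext τ; simp [Kf]; ring
lemma qaP : QA 49 Pf pL := by
  have := (((((qax2.mul qax7).smul 5).add ((qax2.mul qax14).smul (-12))).add
    ((qax7.mul qax14).smul 7)).add (qaM.smul 420)).trunc (m := pL.map (1428 * ·)) (by decide +kernel)
  refine QA.div 1428 (by norm_num) ?_ rfl
  convert this using 1
  ext τ; simp [Pf]; ring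
lemma qaS : QA 49 Sf (List.replicate 49 0) := by
  have := ((qaP.deriv Pf_mf.holo).add ((qaphi.mul qaP).smul (-2))).trunc (m := List.replicate 49 0) (by decide +kernel)
  convert this using 1
  ext τ; simp [Sf]
lemma qaU : QA 49 Uf uL := by
  have := (qaM.add (qaP.smul (-5))).trunc (m := uL) (by decide +kernel)
  convert this using 1
  ext τ; simp [Uf]
lemma qaKK : QA 49 (Kf * Kf) k2L := (qaK.mul qaK).trunc (by decide +kernel)
lemma qaMM : QA 49 (Mf * Mf) mmL := (qaM.mul qaM).trunc (by decide +kernel)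
lemma qaMP : QA 49 (Mf * Pf) mpL := (qaM.mul qaP).trunc (by decide +kernel)
lemma qaPP : QA 49 (Pf * Pf) ppL := (qaP.mul qaP).trunc (by decide +kernel)
lemma qaW : QA 49 Wf wL := by
  have := ((qaMM.add (qaMP.smul 49)).add (qaPP.smul (-350))).trunc (m := wL) (by decide +kernel)
  convert this using 1
  ext τ; simp [Wf]
lemma qaZ : QA 49 Zf zL := by
  have := ((qaMM.add (qaMP.smul 86)).add (qaPP.smul (-199))).trunc (m := zL) (by decide +kernel)
  convert this using 1
  ext τ; simp [Zf]
lemma qaY : QA 49 Yf yL := by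
  have := ((qaM.add (qaP.smul 20)).mul (qaM.add (qaP.smul (-4)))).trunc (m := yL) (by decide +kernel)
  convert this using 1
  ext τ; simp [Yf]
lemma qaV : QA 49 (Uf * (Kf * Kf)) vL := (qaU.mul qaKK).trunc (by decide +kernel)
lemma qaT2 : QA 49 (Uf * (Kf * Kf) * Wf) t2L := (qaV.mul qaW).trunc (by decide +kernel)
lemma qaUU : QA 49 (Uf * Uf) uuL := (qaU.mul qaU).trunc (by decide +kernel)
lemma qaYZ : QA 49 (Yf * Zf) yzL := (qaY.mul qaZ).trunc (by decide +kernel)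
lemma qaT3 : QA 49 (Yf * Zf * (Uf * Uf)) t3L := (qaYZ.mul qaUU).trunc (by decide +kernel)
lemma qaG : QA 49 Gf (List.replicate 49 0) := by
  have := (((qaKK.mul qaKK).add (qaT2.smul 32)).add (qaT3.smul 256)).trunc (m := List.replicate 49 0) (by decide +kernel)
  convert this using 1
  ext τ; simp [Gf]

lemma Sf_zero : Sf = 0 := sturm (k := 6) (m := 49) Sf_mf (by norm_num) (qaS.zero rfl)
lemma Gf_zero : Gf = 0 := sturm (k := 24) (m := 49) Gf_mf (by norm_num) (qaG.zero rfl)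

end N14
end

section
open UpperHalfPlane hiding I
open scoped Manifold MatrixGroups ModularForm Topology
namespace N14
open Derivative Filter Asymptotics

/-- Euler product. -/
def pr (q : ℂ) : ℂ := ∏' n : ℕ, (1 - q ^ (n + 1))

lemma pr_tendsto : Tendsto pr (𝓝 0) (𝓝 1) := by
  have := tendsto_tprod_one_add_of_dominated_convergence (𝓕 := 𝓝 0) (g := 0)
    (f := fun (q : ℂ) (n : ℕ) ↦ -q ^ (n + 1)) (bound := fun n ↦ (1 / 2 : ℝ) ^ (n + 1))
  simp only [Pi.zero_apply, norm_neg, norm_pow, add_zero, tprod_one] at this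
  unfold pr
  simp_rw [sub_eq_add_neg]
  refine this
    (by simpa only [pow_succ'] using (summable_geometric_of_abs_lt_one (by norm_num)).mul_left _)
    (fun k ↦ by simpa using ((continuous_pow (M := ℂ) (k + 1)).tendsto 0).neg) ?_
  filter_upwards [Metric.ball_mem_nhds (0 : ℂ) (by norm_num : (0 : ℝ) < 1 / 2)] with q hq k
  exact pow_le_pow_left₀ (norm_nonneg _) (mem_ball_zero_iff.mp hq).le _

lemma qq_norm {z : ℂ} (hz : 0 < z.im) : ‖qq z‖ < 1 := by
  have := norm_exp_two_pi_I_lt_one ⟨z, hz⟩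
  simpa [qq] using this

lemma qq_pow_norm {z : ℂ} (hz : 0 < z.im) {d : ℕ} (hd : d ≠ 0) : ‖qq z ^ d‖ < 1 := by
  rw [norm_pow]
  exact pow_lt_one₀ (norm_nonneg _) (qq_norm hz) hd

lemma f14_eq_pr {z : ℂ} (hz : 0 < z.im) :
    f14 z = qq z * (pr (qq z ^ 1) * pr (qq z ^ 2) * pr (qq z ^ 7) * pr (qq z ^ 14)) := by
  have m1 := ModularForm.multipliable_one_sub_pow (qq_pow_norm hz (d := 1) (by norm_num))
  have m2 := ModularForm.multipliable_one_sub_pow (qq_pow_norm hz (d := 2) (by norm_num))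
  have m7 := ModularForm.multipliable_one_sub_pow (qq_pow_norm hz (d := 7) (by norm_num))
  have m14 := ModularForm.multipliable_one_sub_pow (qq_pow_norm hz (d := 14) (by norm_num))
  rw [f14, pr, pr, pr, pr, ← m1.tprod_mul m2, ← (m1.mul m2).tprod_mul m7,
    ← ((m1.mul m2).mul m7).tprod_mul m14]
  simp only [← pow_mul, one_mul]

lemma eta_eq_pr (d : ℕ) (z : ℂ) :
    ModularForm.eta (d * z) = cexp (2 * Real.pi * I * (d * z) / 24) * pr (qq z ^ d) := by
  rw [ModularForm.eta, pr]
  have h1 : Function.Periodic.qParam 24 (d * z) = cexp (2 * Real.pi * I * (d * z) / 24) := by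
    simp [Function.Periodic.qParam]
  have h2 (n : ℕ) : ModularForm.eta_q n (d * z) = (qq z ^ d) ^ (n + 1) := by
    rw [ModularForm.eta_q_eq_pow, qq, ← Complex.exp_nat_mul _ d]
    congr 2
    ring
  simp only [h1, h2]

lemma f14_eq_eta {z : ℂ} (hz : 0 < z.im) :
    f14 z = ModularForm.eta ((1 : ℕ) * z) * ModularForm.eta ((2 : ℕ) * z) *
      ModularForm.eta ((7 : ℕ) * z) * ModularForm.eta ((14 : ℕ) * z) := by
  rw [f14_eq_pr hz, eta_eq_pr, eta_eq_pr, eta_eq_pr, eta_eq_pr]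
  have : qq z = cexp (2 * Real.pi * I * ((1 : ℕ) * z) / 24) * cexp (2 * Real.pi * I * ((2 : ℕ) * z) / 24)
      * cexp (2 * Real.pi * I * ((7 : ℕ) * z) / 24) * cexp (2 * Real.pi * I * ((14 : ℕ) * z) / 24) := by
    rw [qq, ← Complex.exp_add, ← Complex.exp_add, ← Complex.exp_add]
    congr 1
    push_cast; ring
  rw [show qq z * (pr (qq z ^ 1) * pr (qq z ^ 2) * pr (qq z ^ 7) * pr (qq z ^ 14)) =
    (cexp (2 * Real.pi * I * ((1 : ℕ) * z) / 24) * cexp (2 * Real.pi * I * ((2 : ℕ) * z) / 24)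
      * cexp (2 * Real.pi * I * ((7 : ℕ) * z) / 24) * cexp (2 * Real.pi * I * ((14 : ℕ) * z) / 24)) *
      (pr (qq z ^ 1) * pr (qq z ^ 2) * pr (qq z ^ 7) * pr (qq z ^ 14)) from by rw [← this]]
  ring

lemma etad_pos (d : ℕ) (hd : 0 < d) {z : ℂ} (hz : 0 < z.im) : 0 < ((d : ℂ) * z).im := by
  simp; positivity

lemma etad_ne (d : ℕ) (hd : 0 < d) {z : ℂ} (hz : 0 < z.im) : ModularForm.eta (d * z) ≠ 0 :=
  ModularForm.eta_ne_zero (etad_pos d hd hz)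

lemma etad_deriv (d : ℕ) (hd : 0 < d) {z : ℂ} (hz : 0 < z.im) :
    HasDerivAt (fun w : ℂ => ModularForm.eta (d * w))
      ((2 * Real.pi * I) * (d * At d 0 E (ofComplex z) / 24) * ModularForm.eta (d * z)) z := by
  have hp := etad_pos d hd hz
  have h1 := (ModularForm.differentiableAt_eta_of_mem_upperHalfPlaneSet hp).hasDerivAt
  have h2 : HasDerivAt (fun w : ℂ => (d : ℂ) * w) (d : ℂ) z := by
    simpa using (hasDerivAt_id z).const_mul (d : ℂ)
  have h3 := HasDerivAt.comp z h1 h2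
  have h4 := ModularForm.logDeriv_eta_eq_E2 ⟨_, hp⟩
  rw [logDeriv_apply, div_eq_iff (etad_ne d hd hz)] at h4
  refine h3.congr_deriv ?_
  symm
  have h5 : At d 0 E (ofComplex z) = EisensteinSeries.E2 ⟨_, hp⟩ := by
    rw [At]
    congr 1
    rw [ofComplex_apply_of_im_pos hz]
    rw [ofComplex_apply_of_im_pos (by simpa using! hp)]
    ext
    simp
  simp only [] at h4
  rw [h5]
  change _ = deriv ModularForm.eta ((⟨_, hp⟩ : ℍ) : ℂ) * d
  rw [h4]
  ring

lemma f14_ne {z : ℂ} (hz : 0 < z.im) : f14 z ≠ 0 := by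
  rw [f14_eq_eta hz]
  have := etad_ne 1 (by norm_num) hz
  have := etad_ne 2 (by norm_num) hz
  have := etad_ne 7 (by norm_num) hz
  have := etad_ne 14 (by norm_num) hz
  simp_all

lemma f14_deriv {z : ℂ} (hz : 0 < z.im) :
    HasDerivAt f14 ((2 * Real.pi * I) * (phi (ofComplex z) * f14 z)) z := by
  have h := (((etad_deriv 1 (by norm_num) hz).mul (etad_deriv 2 (by norm_num) hz)).mul
    (etad_deriv 7 (by norm_num) hz)).mul (etad_deriv 14 (by norm_num) hz)
  have he : f14 =ᶠ[𝓝 z] ((((fun w : ℂ => ModularForm.eta ((1 : ℕ) * w)) * fun w : ℂ => ModularForm.eta ((2 : ℕ) * w)) *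
      fun w : ℂ => ModularForm.eta ((7 : ℕ) * w)) * fun w : ℂ => ModularForm.eta ((14 : ℕ) * w)) := by
    filter_upwards [isOpen_upperHalfPlaneSet.mem_nhds hz] with w hw using f14_eq_eta hw
  refine (h.congr_of_eventuallyEq he).congr_deriv ?_
  rw [f14_eq_eta hz]
  have h1 : At (1 : ℕ) 0 E (ofComplex z) = E (ofComplex z) := by simp [At]
  rw [h1]
  simp [phi, psi, X]
  ring

/-- The newform on the upper half plane. -/
def Ff : ℍ → ℂ := fun τ => f14 τ

lemma Ff_of {z : ℂ} (hz : 0 < z.im) : Ff (ofComplex z) = f14 z := by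
  simp [Ff, ofComplex_apply_of_im_pos hz]

lemma Ff_md : MDiff Ff := by
  rw [UpperHalfPlane.mdifferentiable_iff]
  intro z hz
  refine DifferentiableWithinAt.congr (f := f14) (f14_deriv hz).differentiableAt.differentiableWithinAt
    (fun w hw => ?_) ?_
  · exact Ff_of hw
  · exact Ff_of hz

lemma nd {g : ℂ → ℂ} {F : ℍ → ℂ} (h : ∀ z : ℂ, 0 < z.im → g z = F (ofComplex z)) :
    ∀ z : ℂ, 0 < z.im → nderiv g z = D F (ofComplex z) := by
  intro z hz
  have he : g =ᶠ[𝓝 z] F ∘ ofComplex := by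
    filter_upwards [isOpen_upperHalfPlaneSet.mem_nhds hz] with w hw using h w hw
  rw [nderiv, normalizedDerivOfComplex, he.deriv_eq, ofComplex_apply_of_im_pos hz]

lemma two_pi_ne : (2 * Real.pi * I : ℂ) ≠ 0 := by
  have : (Real.pi : ℂ) ≠ 0 := by exact_mod_cast Real.pi_ne_zero
  simp [this]

lemma D_Ff : D Ff = phi * Ff := by
  ext τ
  have h := nd (g := f14) (F := Ff) (fun z hz => (Ff_of hz).symm) τ τ.2
  rw [ofComplex_apply] at h
  rw [← h, nderiv, (f14_deriv τ.2).deriv, ofComplex_apply, inv_mul_cancel_left₀ two_pi_ne]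
  rfl

lemma D_Pf : D Pf = (2 : ℂ) • (phi * Pf) := by
  have := Sf_zero
  rw [Sf] at this
  ext τ
  have h := congrFun this τ
  simp at h ⊢
  linear_combination h

lemma Pf_const : ∃ C : ℂ, ∀ τ : ℍ, Pf τ = C * Ff τ ^ 2 := by
  have hP : ∀ z : ℂ, 0 < z.im → HasDerivAt (Pf ∘ ofComplex) ((2 * Real.pi * I) * (2 * (phi (ofComplex z) * Pf (ofComplex z)))) z := by
    intro z hz
    have h := (((UpperHalfPlane.mdifferentiable_iff.mp Pf_mf.holo) z hz).differentiableAt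
      (isOpen_upperHalfPlaneSet.mem_nhds hz)).hasDerivAt
    refine h.congr_deriv ?_
    have h2 := congrFun D_Pf ⟨z, hz⟩
    rw [normalizedDerivOfComplex, inv_mul_eq_iff_eq_mul₀ two_pi_ne] at h2
    rw [ofComplex_apply_of_im_pos hz]
    exact h2
  have hd : ∀ z : ℂ, 0 < z.im → HasDerivAt (fun w => (Pf ∘ ofComplex) w / f14 w ^ 2) 0 z := by
    intro z hz
    have hne := f14_ne hz
    refine ((hP z hz).div ((f14_deriv hz).pow 2) (pow_ne_zero 2 hne)).congr_deriv ?_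
    rw [div_eq_zero_iff]
    left
    simp
    ring
  obtain ⟨C, hC⟩ := isOpen_upperHalfPlaneSet.exists_is_const_of_deriv_eq_zero
    (convex_halfSpace_im_gt 0).isPreconnected
    (fun z hz => (hd z hz).differentiableAt.differentiableWithinAt) (fun z hz => (hd z hz).deriv)
  refine ⟨C, fun τ => ?_⟩
  have h := hC τ τ.2
  rw [div_eq_iff (pow_ne_zero 2 (f14_ne τ.2))] at h
  simpa [ofComplex_apply, Ff] using h

lemma qh_tendsto : Tendsto qh atImInfty (𝓝 0) := by
  have := UpperHalfPlane.qParam_tendsto_atImInfty zero_lt_one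
  simpa [Function.Periodic.qParam, qh] using! this

lemma qh_ne (τ : ℍ) : qh τ ≠ 0 := Complex.exp_ne_zero _

lemma Ff_lim : Tendsto (fun τ => Ff τ ^ 2 / qh τ ^ 2) atImInfty (𝓝 1) := by
  have key (d : ℕ) (hd : d ≠ 0) : Tendsto (fun τ => pr (qh τ ^ d)) atImInfty (𝓝 1) := by
    refine pr_tendsto.comp ?_
    simpa [hd] using qh_tendsto.pow d
  have h := ((((key 1 (by norm_num)).mul (key 2 (by norm_num))).mul (key 7 (by norm_num))).mul
    (key 14 (by norm_num))).pow 2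
  simp only [mul_one, one_pow] at h
  refine h.congr fun τ => ?_
  rw [Ff, f14_eq_pr τ.2]
  have : qq τ = qh τ := rfl
  have := qh_ne τ
  rw [‹qq τ = qh τ›]
  field_simp

lemma Pf_lim : Tendsto (fun τ => Pf τ / qh τ ^ 2) atImInfty (𝓝 1) := by
  have h : QA 49 Pf pL := qaP
  obtain ⟨l, hl⟩ : ∃ l, pL = 0 :: 0 :: 1 :: l := ⟨_, rfl⟩
  have h3 : (fun τ => (Pf τ - ev pL (qh τ)) / qh τ ^ 2) =O[atImInfty] qh := by
    have h4 : (fun τ => Pf τ - ev pL (qh τ)) =O[atImInfty] fun τ => qh τ ^ 3 := by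
      refine (IsBigO.trans h (sc_le (show 3 ≤ 49 by norm_num))).trans ?_
      refine IsBigO.of_bound 1 (Eventually.of_forall fun τ => ?_)
      rw [norm_qh_pow, one_mul, sc, Real.norm_eq_abs, abs_of_pos (Real.exp_pos _)]
    have h5 := h4.mul (isBigO_refl (fun τ => (qh τ ^ 2)⁻¹) atImInfty)
    refine (h5.congr (fun τ => ?_) (fun τ => ?_))
    · rw [div_eq_mul_inv]
    · have := qh_ne τ
      field_simp
  have h6 := h3.trans_tendsto qh_tendsto
  have hc : Continuous fun x => ev l x := by
    have : (fun x => ev l x) = fun x => ∑ i ∈ Finset.range l.length, ((l.getD i 0 : ℤ) : ℂ) * x ^ i := by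
      ext x; exact ev_sum l x
    rw [this]; fun_prop
  have h7 : Tendsto (fun τ => 1 + qh τ * ev l (qh τ)) atImInfty (𝓝 1) := by
    have := (qh_tendsto.mul ((hc.tendsto 0).comp qh_tendsto)).const_add (1 : ℂ)
    simpa using this
  have h8 := h6.add h7
  rw [zero_add] at h8
  refine h8.congr fun τ => ?_
  rw [hl]
  have := qh_ne τ
  simp only [ev]
  field_simp
  push_cast
  ring

lemma Pf_eq : ∀ τ, Pf τ = Ff τ ^ 2 := by
  obtain ⟨C, hC⟩ := Pf_const
  have h1 := Ff_lim.const_mul C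
  have h2 : Tendsto (fun τ => Pf τ / qh τ ^ 2) atImInfty (𝓝 (C * 1)) := by
    refine h1.congr fun τ => ?_
    rw [hC]; ring
  have := tendsto_nhds_unique Pf_lim h2
  intro τ
  rw [hC, ← mul_one C, ← this, one_mul]

lemma D2_Ff : D (D Ff) = (D phi + phi * phi) * Ff := by
  rw [D_Ff, normalizedDerivOfComplex_mul _ _ phi_md Ff_md, D_Ff]
  ring

lemma D3_Ff : D (D (D Ff)) = (D (D phi) + (3 : ℂ) • (phi * D phi) + phi * phi * phi) * Ff := by
  have h := normalizedDerivOfComplex_mdifferentiable phi_md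
  rw [D2_Ff, normalizedDerivOfComplex_mul _ _ (h.add (phi_md.mul phi_md)) Ff_md, D_Ff,
    normalizedDerivOfComplex_add _ _ h (phi_md.mul phi_md),
    normalizedDerivOfComplex_mul _ _ phi_md phi_md]
  ext τ
  simp
  ring

lemma D_Mf : D Mf = (2 : ℂ) • D (D phi) - (2 : ℂ) • (phi * D phi) := by
  have h := normalizedDerivOfComplex_mdifferentiable phi_md
  rw [Mf, normalizedDerivOfComplex_sub _ _ (h.const_smul _) (phi_md.mul phi_md),
    normalizedDerivOfComplex_smul _ _ h, normalizedDerivOfComplex_mul _ _ phi_md phi_md]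
  ext τ
  simp
  ring

lemma I2_eq {z : ℂ} (hz : 0 < z.im) : I2 f14 z = Mf (ofComplex z) / f14 z ^ 2 := by
  have h0 : ∀ z : ℂ, 0 < z.im → f14 z = Ff (ofComplex z) := fun z hz => (Ff_of hz).symm
  have h1 := nd h0
  have h2 := nd h1
  have hne := f14_ne hz
  rw [I2, h1 z hz, h2 z hz, D2_Ff, D_Ff]
  simp only [Pi.mul_apply, Pi.add_apply, Ff_of hz, Mf, Pi.sub_apply, Pi.smul_apply, smul_eq_mul]
  field_simp
  ring

lemma J2_eq {z : ℂ} (hz : 0 < z.im) : J2 f14 z = Kf (ofComplex z) / f14 z ^ 3 := by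
  have h0 : ∀ z : ℂ, 0 < z.im → f14 z = Ff (ofComplex z) := fun z hz => (Ff_of hz).symm
  have h1 := nd h0
  have h2 := nd h1
  have h3 := nd h2
  have hne := f14_ne hz
  rw [J2, h1 z hz, h2 z hz, h3 z hz, D3_Ff, D2_Ff, D_Ff, Kf, D_Mf]
  simp only [Pi.mul_apply, Pi.add_apply, Ff_of hz, Mf, Pi.sub_apply, Pi.smul_apply, smul_eq_mul]
  field_simp
  ring

lemma main {z : ℂ} (hz : 0 < z.im) :
      J2 f14 z ^ 4 +
      32 * (I2 f14 z - 5) * (I2 f14 z ^ 2 + 49 * I2 f14 z - 350) * J2 f14 z ^ 2 +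
      256 * (I2 f14 z + 20) * (I2 f14 z - 4) *
        (I2 f14 z ^ 2 + 86 * I2 f14 z - 199) * (I2 f14 z - 5) ^ 2 = 0 := by
  have hne := f14_ne hz
  have hG := congrFun Gf_zero (ofComplex z)
  have hP := Pf_eq (ofComplex z)
  rw [Ff_of hz] at hP
  simp only [Gf, Uf, Wf, Zf, Yf, Pi.mul_apply, Pi.add_apply, Pi.smul_apply, smul_eq_mul,
    Pi.zero_apply, hP] at hG
  rw [I2_eq hz, J2_eq hz]
  field_simp
  linear_combination hG

end N14
end

/-- The newform of weight two on `Γ₀(14)` satisfies an algebraic relation between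
its differential invariants `I₂` and `J₂`. -/
theorem newform14_invariant_relation :
    ∀ τ : ℂ, 0 < τ.im →
      J2 f14 τ ^ 4 +
      32 * (I2 f14 τ - 5) * (I2 f14 τ ^ 2 + 49 * I2 f14 τ - 350) * J2 f14 τ ^ 2 +
      256 * (I2 f14 τ + 20) * (I2 f14 τ - 4) *
        (I2 f14 τ ^ 2 + 86 * I2 f14 τ - 199) * (I2 f14 τ - 5) ^ 2 = 0 := by
  intro τ hτ
  exact N14.main hτ
end
end
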